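/- arXiv:2010.00653 — 2 statements merged into one kernel-verified Lean document; each statement's English description precedes it below -/
import Mathlib

section
/- Let K be an algebraically closed field, let n >= 1, and let r be a symmetric rank table. Then J^ss_r is the intersection of the ideals J^ss_z over all z in FPF_n(I_n) that are minimal in the Bruhat order on I^FPF_infty among the elements z of FPF_n(I_n) satisfying r_z(i,j) <= r(i,j) for all i,j in [n]. -/
namespace Paper

/-!
We model a permutation of the positive integers `{1, 2, 3, ...}` as an `Equiv.Perm ℕ`
that fixes `0`; all notions below refer only to positive inputs.
-/

/-- The rank `r_w(i,j) = #{a ∈ [i] : w(a) ∈ [j]}` of the `i × j` partial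
permutation matrix of `w`, where `[k] = {1, ..., k}`. -/
def rnk (w : Equiv.Perm ℕ) (i j : ℕ) : ℕ :=
  ((Finset.Icc 1 i).filter fun a => w a ∈ Finset.Icc 1 j).card

/-- Right descent set `Des_R(w) = {i ≥ 1 : w(i) > w(i+1)}`. -/
def DesR (w : Equiv.Perm ℕ) : Set ℕ := {i | 1 ≤ i ∧ w (i + 1) < w i}

/-- Left descent set `Des_L(w) = Des_R(w⁻¹)`. -/
def DesL (w : Equiv.Perm ℕ) : Set ℕ := DesR w⁻¹

/-- `S_∞`: permutations of the positive integers fixing all but finitely many points. -/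
def SInfty : Set (Equiv.Perm ℕ) :=
  {w | w 0 = 0 ∧ Set.Finite {i : ℕ | w i ≠ i}}

/-- `S^{m,n}_∞ = {w ∈ S_∞ : Des_R(w) ⊆ [m], Des_L(w) ⊆ [n]}`. -/
def SmnInfty (m n : ℕ) : Set (Equiv.Perm ℕ) :=
  {w | w ∈ SInfty ∧ DesR w ⊆ Set.Icc 1 m ∧ DesL w ⊆ Set.Icc 1 n}

/-- The Rothe diagram `D(w) = {(i,j) : 0 < j < w(i), 0 < i < w⁻¹(j)}`. -/
def Rothe (w : Equiv.Perm ℕ) : Set (ℕ × ℕ) :=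
  {p | 0 < p.2 ∧ p.2 < w p.1 ∧ 0 < p.1 ∧ p.1 < w⁻¹ p.2}

/-- The function `1_FPF`, sending `i ↦ i - (-1)^i` on positive integers (it fixes `0`). -/
def oneFPF : ℕ → ℕ := fun i => if i % 2 = 1 then i + 1 else i - 1

/-- `I^FPF_∞`: fixed-point-free involutions of the positive integers agreeing with
`1_FPF` at all sufficiently large inputs. -/
def IFPFInfty : Set (Equiv.Perm ℕ) :=
  {z | z 0 = 0 ∧ (∀ i, 1 ≤ i → z i ≠ i) ∧ z * z = 1 ∧ ∃ N, ∀ i, N ≤ i → z i = oneFPF i}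

/-- The skew-symmetric Rothe diagram `D^ss(z) = {(i,j) : 0 < j < z(i), j < i < z(j)}`. -/
def Dss (z : Equiv.Perm ℕ) : Set (ℕ × ℕ) :=
  {p | 0 < p.2 ∧ p.2 < z p.1 ∧ p.2 < p.1 ∧ p.1 < z p.2}

/-- `FPF_n(I_n) = {z ∈ I^FPF_∞ : D^ss(z) ⊆ [n] × [n]}`. -/
def FPFIn (n : ℕ) : Set (Equiv.Perm ℕ) :=
  {z | z ∈ IFPFInfty ∧ Dss z ⊆ Set.Icc 1 n ×ˢ Set.Icc 1 n}

/-- `ℓ_fpf(z) = |D^ss(z)|`. -/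
noncomputable def ellFpf (z : Equiv.Perm ℕ) : ℕ := (Dss z).ncard

/-- Bruhat order on `I^FPF_∞`: reflexive-transitive closure of `z < (i,j) z (i,j)`
whenever `i < j` and `ℓ_fpf` goes up by exactly one. -/
def fpfBruhatLe (z y : Equiv.Perm ℕ) : Prop :=
  Relation.ReflTransGen
    (fun a b => ∃ i j : ℕ, 1 ≤ i ∧ i < j ∧
      b = Equiv.swap i j * a * Equiv.swap i j ∧ ellFpf b = ellFpf a + 1) z y

/-- `i` is a visible descent of `z` if `i ≥ 1` and `z(i+1) < min(i, z(i))`. -/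
def visibleDescent (z : Equiv.Perm ℕ) (i : ℕ) : Prop :=
  1 ≤ i ∧ z (i + 1) < min i (z i)

/-- `Ψ(z, p) = {(p,r) z (p,r) : r > p, ℓ_fpf((p,r) z (p,r)) = ℓ_fpf(z) + 1}`. -/
def PsiSet (z : Equiv.Perm ℕ) (p : ℕ) : Set (Equiv.Perm ℕ) :=
  {y | ∃ r : ℕ, p < r ∧ y = Equiv.swap p r * z * Equiv.swap p r ∧ ellFpf y = ellFpf z + 1}

/-- The dominant component `dom(z) = {(i,j) : i, j ≥ 1, r_z(i,j) = 0}`. -/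
def domSet (z : Equiv.Perm ℕ) : Set (ℕ × ℕ) :=
  {p | 1 ≤ p.1 ∧ 1 ≤ p.2 ∧ rnk z p.1 p.2 = 0}

/-- `(p, q)` is an outer corner of `dom(z)`. -/
def IsOuterCorner (z : Equiv.Perm ℕ) (p q : ℕ) : Prop :=
  1 ≤ p ∧ 1 ≤ q ∧ (p, q) ∉ domSet z ∧
    (p = 1 ∨ (p - 1, q) ∈ domSet z) ∧ (q = 1 ∨ (p, q - 1) ∈ domSet z)

/-- `I_n`: involutions in `S_∞` fixing every `i > n`. -/
def InvolIn (n : ℕ) : Set (Equiv.Perm ℕ) :=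
  {w | w 0 = 0 ∧ w * w = 1 ∧ ∀ i, n < i → w i = i}

/-- The fixed points of `z` lying in `[n]`. -/
def fixedPtsIn (n : ℕ) (z : Equiv.Perm ℕ) : Finset ℕ :=
  (Finset.Icc 1 n).filter fun i => z i = i

/-- The function swapping `m + 2t - 1` and `m + 2t` for every `t ≥ 1`, fixing all other points. -/
def tailSwapFun (m : ℕ) : ℕ → ℕ := fun i =>
  if i ≤ m then i else if (i - m) % 2 = 1 then i + 1 else i - 1

theorem tailSwapFun_involutive (m : ℕ) : Function.Involutive (tailSwapFun m) := by
  intro i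
  unfold tailSwapFun
  split_ifs <;> omega

/-- The involution swapping `m + 2t - 1` and `m + 2t` for every `t ≥ 1`. -/
def tailSwap (m : ℕ) : Equiv.Perm ℕ :=
  Function.Involutive.toPerm _ (tailSwapFun_involutive m)

/-- The fixed-point-free standardization `FPF_n(z) = z ⋅ (i_1,n+1)⋯(i_k,n+k) ⋅ c`,
where `i_1 < ⋯ < i_k` are the fixed points of `z` in `[n]` and `c` swaps
`n+k+2t-1, n+k+2t` for all `t ≥ 1`. -/
noncomputable def fpfStd (n : ℕ) (z : Equiv.Perm ℕ) : Equiv.Perm ℕ :=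
  z *
    (List.ofFn fun t : Fin (fixedPtsIn n z).card =>
      Equiv.swap ((fixedPtsIn n z).orderEmbOfFin rfl t) (n + (t : ℕ) + 1)).prod *
    tailSwap (n + (fixedPtsIn n z).card)

/-- `Mat^ss_n(K)`: skew-symmetric `n × n` matrices (transpose is the negative, zero diagonal).
Row/column index `a : Fin n` corresponds to the (1-indexed) row/column `a + 1`. -/
def MatSS (K : Type*) [CommRing K] (n : ℕ) : Set (Matrix (Fin n) (Fin n) K) :=
  {A | A.transpose = -A ∧ ∀ i, A i i = 0}

/-- The skew-symmetric matrix Schubert variety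
`X^ss_z = {A ∈ Mat^ss_n : rank A_{[i][j]} ≤ r_z(i,j) for all i, j ∈ [n]}`. -/
noncomputable def Xss (K : Type*) [Field K] (n : ℕ) (z : Equiv.Perm ℕ) :
    Set (Matrix (Fin n) (Fin n) K) :=
  {A | A ∈ MatSS K n ∧ ∀ (i j : ℕ) (hi : i ≤ n) (hj : j ≤ n), 1 ≤ i → 1 ≤ j →
    (A.submatrix (Fin.castLE hi) (Fin.castLE hj)).rank ≤ rnk z i j}

/-- `#{(i,j) : i > j, j < z(i), i < z(j)}` for a permutation of `Fin N`
(the `0`-indexed version of `ℓ_fpf`). -/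
def ellFpfFin {N : ℕ} (z : Equiv.Perm (Fin N)) : ℕ :=
  (Finset.univ.filter fun p : Fin N × Fin N => p.2 < p.1 ∧ p.2 < z p.1 ∧ p.1 < z p.2).card

/-- The Pfaffian of an `N × N` matrix:
`pf(A) = ∑_{z fpf involution of [N]} (-1)^{ℓ_fpf(z)} ∏_{z(i) < i} A_{z(i), i}`.
(The sum is empty, hence `0`, when `N` is odd.) -/
noncomputable def Pfaffian {R : Type*} [CommRing R] {N : ℕ} (A : Matrix (Fin N) (Fin N) R) : R :=
  ∑ z ∈ Finset.univ.filter (fun z : Equiv.Perm (Fin N) => (∀ i, z i ≠ i) ∧ ∀ i, z (z i) = i),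
    (-1 : R) ^ ellFpfFin z * ∏ i ∈ Finset.univ.filter (fun i : Fin N => z i < i), A (z i) i

/-- Index set for the variables `u_{ij}`, `n ≥ i > j ≥ 1`, of the coordinate ring
`R_n = K[Mat^ss_n]`; the variable `⟨(a, b), _⟩` is `u_{a+1, b+1}`. -/
abbrev SSVar (n : ℕ) : Type := {p : Fin n × Fin n // p.2 < p.1}

/-- The generic skew-symmetric matrix `U^ss` over `R_n`. -/
noncomputable def Uss (K : Type*) [CommRing K] (n : ℕ) :
    Matrix (Fin n) (Fin n) (MvPolynomial (SSVar n) K) :=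
  Matrix.of fun i j =>
    if h : j < i then MvPolynomial.X ⟨(i, j), h⟩
    else if h' : i < j then -MvPolynomial.X ⟨(j, i), h'⟩
    else 0

/-- The ideal of polynomials vanishing on a set `X`, where a point `A` is evaluated
via `ev A : σ → K`. -/
noncomputable def vanishingIdeal {K : Type*} [CommRing K] {σ M : Type*}
    (X : Set M) (ev : M → σ → K) : Ideal (MvPolynomial σ K) where
  carrier := {f | ∀ A ∈ X, MvPolynomial.eval (ev A) f = 0}
  zero_mem' := by simp
  add_mem' := by
    intro f g hf hg
    simp only [Set.mem_setOf_eq] at *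
    intro A hA
    rw [map_add, hf A hA, hg A hA, add_zero]
  smul_mem' := by
    intro c f hf
    simp only [Set.mem_setOf_eq] at *
    intro A hA
    rw [smul_eq_mul, map_mul, hf A hA, mul_zero]

/-- `I(X^ss_z) ⊆ R_n`, where `u_{ij}` is evaluated at `A` as `A_{ij}`. -/
noncomputable def IXss (K : Type*) [Field K] (n : ℕ) (z : Equiv.Perm ℕ) :
    Ideal (MvPolynomial (SSVar n) K) :=
  vanishingIdeal (Xss K n z) fun A v => A v.1.1 v.1.2

/-- `pf(U^ss_{RR})` for a finite row/column set `R` (listed in increasing order). -/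
noncomputable def pfUss (K : Type*) [CommRing K] {n : ℕ} (R : Finset (Fin n)) :
    MvPolynomial (SSVar n) K :=
  Pfaffian ((Uss K n).submatrix (fun s => R.orderEmbOfFin rfl s) fun t => R.orderEmbOfFin rfl t)

/-- The ideal `I^ss_z`, generated by the Pfaffians `pf(U^ss_{RR})` over all nonempty
even-size `R ⊆ [n]` such that `R ⊆ [i]` and `|R ∩ [j]| > r_z(i,j)` for some `i ≥ j`. -/
noncomputable def IssIdeal (K : Type*) [Field K] (n : ℕ) (z : Equiv.Perm ℕ) :
    Ideal (MvPolynomial (SSVar n) K) :=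
  Ideal.span {f : MvPolynomial (SSVar n) K | ∃ R : Finset (Fin n),
    R.Nonempty ∧ Even R.card ∧
    (∃ i j : ℕ, 1 ≤ j ∧ j ≤ i ∧ i ≤ n ∧ (∀ a ∈ R, (a : ℕ) + 1 ≤ i) ∧
      rnk z i j < (R.filter fun a : Fin n => (a : ℕ) + 1 ≤ j).card) ∧
    f = pfUss K R}

/-- The square-free monomial `u^ss_{AB}`: zero if `A ⊙ B` meets the diagonal, and otherwise
the product of the variables `u_{ij}` over the pairs `i > j` with `(i,j)` or `(j,i)` in
`A ⊙ B = {(a_0, b_r), (a_1, b_{r-1}), ..., (a_r, b_0)}`. -/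
noncomputable def ussMon (K : Type*) [CommRing K] {n : ℕ} (A B : Finset (Fin n)) :
    MvPolynomial (SSVar n) K :=
  if h : A.card = B.card then
    if ∃ t : Fin A.card, (A.orderEmbOfFin rfl t : Fin n) = B.orderEmbOfFin h.symm t.rev then 0
    else
      ∏ v ∈ Finset.univ.filter (fun v : SSVar n => ∃ t : Fin A.card,
          (A.orderEmbOfFin rfl t = v.1.1 ∧ B.orderEmbOfFin h.symm t.rev = v.1.2) ∨
          (A.orderEmbOfFin rfl t = v.1.2 ∧ B.orderEmbOfFin h.symm t.rev = v.1.1)),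
        MvPolynomial.X v
  else 0

/-- The monomial ideal `J^ss_r` of a symmetric rank table `r`, generated by the monomials
`u^ss_{AB}` with `A ⊆ [i]`, `B ⊆ [j]`, `|A| = |B| = r(i,j) + 1` for some `n ≥ i ≥ j ≥ 1`. -/
noncomputable def JssIdealOfTable (K : Type*) [CommRing K] (n : ℕ) (r : ℕ → ℕ → ℕ) :
    Ideal (MvPolynomial (SSVar n) K) :=
  Ideal.span {g : MvPolynomial (SSVar n) K | ∃ (i j : ℕ) (A B : Finset (Fin n)),
    1 ≤ j ∧ j ≤ i ∧ i ≤ n ∧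
    (∀ a ∈ A, (a : ℕ) + 1 ≤ i) ∧ (∀ b ∈ B, (b : ℕ) + 1 ≤ j) ∧
    A.card = r i j + 1 ∧ B.card = r i j + 1 ∧ g = ussMon K A B}

/-- `J^ss_z = J^ss_{r_z}`. -/
noncomputable def JssIdeal (K : Type*) [CommRing K] (n : ℕ) (z : Equiv.Perm ℕ) :
    Ideal (MvPolynomial (SSVar n) K) :=
  JssIdealOfTable K n (rnk z)

/-- Total degree of a monomial (exponent vector). -/
def totalDeg {σ : Type*} (m : σ →₀ ℕ) : ℕ := m.sum fun _ e => e

/-- The lexicographic order on the variables `u_{ij}` by the pair `(i, j)`. -/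
def varLT {n : ℕ} (v w : SSVar n) : Prop :=
  v.1.1 < w.1.1 ∨ (v.1.1 = w.1.1 ∧ v.1.2 < w.1.2)

/-- The (graded) reverse lexicographic term order on monomials of `R_n`:
`m₁ < m₂` iff `deg m₁ < deg m₂`, or the degrees agree and the lexicographically largest
variable with different exponents has strictly larger exponent in `m₁`. -/
def revlexLT {n : ℕ} (m₁ m₂ : SSVar n →₀ ℕ) : Prop :=
  totalDeg m₁ < totalDeg m₂ ∨
    (totalDeg m₁ = totalDeg m₂ ∧ ∃ v, m₂ v < m₁ v ∧ ∀ w, varLT v w → m₁ w = m₂ w)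

/-- The initial ideal of `I` with respect to a strict term order `lt`: the ideal
generated by the leading monomials `init(f)` of the nonzero `f ∈ I`. -/
noncomputable def initIdeal {K : Type*} [CommRing K] {σ : Type*}
    (lt : (σ →₀ ℕ) → (σ →₀ ℕ) → Prop) (I : Ideal (MvPolynomial σ K)) :
    Ideal (MvPolynomial σ K) :=
  Ideal.span {g : MvPolynomial σ K | ∃ f ∈ I, f ≠ 0 ∧ ∃ m : σ →₀ ℕ, m ∈ f.support ∧
    (∀ m' ∈ f.support, m' ≠ m → lt m' m) ∧ g = MvPolynomial.monomial m (1 : K)}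

/-- A term order on the monomials of a polynomial ring: a linear order in which `1` is
the unique minimum and multiplication by a fixed monomial preserves order. -/
structure TermOrder (σ : Type*) where
  le : (σ →₀ ℕ) → (σ →₀ ℕ) → Prop
  trans : ∀ a b c, le a b → le b c → le a c
  antisymm : ∀ a b, le a b → le b a → a = b
  total : ∀ a b, le a b ∨ le b a
  zero_le : ∀ a, le 0 a
  add_le_add_right : ∀ a b c, le a b → le (a + c) (b + c)

/-- The initial ideal of `I` with respect to a term order `τ`. -/
noncomputable def initIdealLe {K : Type*} [CommRing K] {σ : Type*}
    (τ : TermOrder σ) (I : Ideal (MvPolynomial σ K)) : Ideal (MvPolynomial σ K) :=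
  Ideal.span {g : MvPolynomial σ K | ∃ f ∈ I, f ≠ 0 ∧ ∃ m : σ →₀ ℕ, m ∈ f.support ∧
    (∀ m' ∈ f.support, τ.le m' m) ∧ g = MvPolynomial.monomial m (1 : K)}

/-- An ideal is homogeneous (w.r.t. total degree) iff it contains all homogeneous
components of its elements. -/
def IsHomogIdeal {K : Type*} [CommSemiring K] {σ : Type*}
    (I : Ideal (MvPolynomial σ K)) : Prop :=
  ∀ f ∈ I, ∀ d : ℕ, MvPolynomial.homogeneousComponent d f ∈ I

/-- The reading order on boxes: rows top to bottom, each row right to left. -/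
def pdRel (p q : ℕ × ℕ) : Prop := p.1 < q.1 ∨ (p.1 = q.1 ∧ q.2 ≤ p.2)

instance : DecidableRel pdRel := fun p q => by unfold pdRel; infer_instance

instance : IsTrans (ℕ × ℕ) pdRel :=
  ⟨fun a b c hab hbc => by unfold pdRel at *; omega⟩

instance : IsAntisymm (ℕ × ℕ) pdRel :=
  ⟨fun a b hab hba => by
    unfold pdRel at hab hba
    exact Prod.ext_iff.mpr ⟨by omega, by omega⟩⟩

instance : IsTotal (ℕ × ℕ) pdRel :=
  ⟨fun a b => by unfold pdRel; omega⟩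

/-- The pipe dream reading word of a finite set `D` of boxes: the letters `i + j - 1`
over `(i, j) ∈ D`, in the order making `(i, -j)` increase lexicographically. -/
def pdWord (D : Finset (ℕ × ℕ)) : List ℕ :=
  (D.sort pdRel).map fun p => p.1 + p.2 - 1

/-- The product `s_{i_1} s_{i_2} ⋯ s_{i_l}` of simple transpositions. -/
def wordProd (l : List ℕ) : Equiv.Perm ℕ :=
  (l.map fun i => Equiv.swap i (i + 1)).prod

/-- `l` is a reduced word for `w`: a minimal-length word of positive letters whose
product of simple transpositions is `w`. -/
def IsReducedWordOf (w : Equiv.Perm ℕ) (l : List ℕ) : Prop :=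
  (∀ a ∈ l, 1 ≤ a) ∧ wordProd l = w ∧
    ∀ l' : List ℕ, (∀ a ∈ l', 1 ≤ a) → wordProd l' = w → l.length ≤ l'.length

/-- The set `RP(w)` of reduced pipe dreams for `w`. -/
def RP (w : Equiv.Perm ℕ) : Set (Finset (ℕ × ℕ)) :=
  {D | (∀ p ∈ D, 1 ≤ p.1 ∧ 1 ≤ p.2) ∧ IsReducedWordOf w (pdWord D)}

/-- `I^FPF_m`: involutions in `S_∞` that are fixed-point-free on `[m]` and fix
all `i > m`. -/
def IFPFm (m : ℕ) : Set (Equiv.Perm ℕ) :=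
  {y | y 0 = 0 ∧ y * y = 1 ∧ (∀ i, 1 ≤ i → i ≤ m → y i ≠ i) ∧ ∀ i, m < i → y i = i}

/-- `z = FPF_m(y)`: `z` agrees with `y` on `[m]` and swaps `m + 2k - 1, m + 2k`
for all `k ≥ 1`. -/
def IsFPFStdOf (m : ℕ) (y z : Equiv.Perm ℕ) : Prop :=
  (∀ i, i ≤ m → z i = y i) ∧
    ∀ k : ℕ, z (m + 2 * k + 1) = m + 2 * k + 2 ∧ z (m + 2 * k + 2) = m + 2 * k + 1

/-- The set `FP(z)` of fpf-involution pipe dreams for `z ∈ I^FPF_∞`. -/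
def FP (z : Equiv.Perm ℕ) : Set (Finset (ℕ × ℕ)) :=
  {E | ∃ (m : ℕ) (y : Equiv.Perm ℕ) (D : Finset (ℕ × ℕ)), Even m ∧ y ∈ IFPFm m ∧
    IsFPFStdOf m y z ∧ D ∈ RP y ∧ D.image Prod.swap = D ∧
    E = D.filter fun p => p.2 < p.1}

/-- The minor `det(U_{AB})` of the generic `m × n` matrix `U`, with rows `A` and
columns `B` listed in increasing order. -/
noncomputable def genMinor (K : Type*) [CommRing K] {m n : ℕ}
    (A : Finset (Fin m)) (B : Finset (Fin n)) (h : A.card = B.card) :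
    MvPolynomial (Fin m × Fin n) K :=
  (Matrix.of fun s t : Fin A.card =>
    (MvPolynomial.X (A.orderEmbOfFin rfl s, B.orderEmbOfFin h.symm t) :
      MvPolynomial (Fin m × Fin n) K)).det

/-- The antidiagonal monomial `u_{AB} = ∏_{(a,b) ∈ A ⊙ B} u_{ab}`. -/
noncomputable def genMon (K : Type*) [CommRing K] {m n : ℕ}
    (A : Finset (Fin m)) (B : Finset (Fin n)) (h : A.card = B.card) :
    MvPolynomial (Fin m × Fin n) K :=
  ∏ t : Fin A.card, MvPolynomial.X (A.orderEmbOfFin rfl t, B.orderEmbOfFin h.symm t.rev)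

/-- The exponent vector of the antidiagonal monomial `u_{AB}`. -/
noncomputable def antidiagExp {m n : ℕ} (A : Finset (Fin m)) (B : Finset (Fin n))
    (h : A.card = B.card) : (Fin m × Fin n) →₀ ℕ :=
  ∑ t : Fin A.card, Finsupp.single (A.orderEmbOfFin rfl t, B.orderEmbOfFin h.symm t.rev) 1

/-- The ideal `I_w`, generated by the minors `det(U_{AB})` with `A ⊆ [i]`, `B ⊆ [j]`,
`|A| = |B| = r_w(i,j) + 1` for some `(i,j) ∈ [m] × [n]`. -/
noncomputable def IwIdeal (K : Type*) [Field K] (m n : ℕ) (w : Equiv.Perm ℕ) :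
    Ideal (MvPolynomial (Fin m × Fin n) K) :=
  Ideal.span {g : MvPolynomial (Fin m × Fin n) K |
    ∃ (i j : ℕ) (A : Finset (Fin m)) (B : Finset (Fin n)) (h : A.card = B.card),
      1 ≤ i ∧ i ≤ m ∧ 1 ≤ j ∧ j ≤ n ∧ (∀ a ∈ A, (a : ℕ) + 1 ≤ i) ∧
      (∀ b ∈ B, (b : ℕ) + 1 ≤ j) ∧ A.card = rnk w i j + 1 ∧ g = genMinor K A B h}

/-- The monomial ideal `J_w`, generated by the monomials `u_{AB}` with `A ⊆ [i]`,
`B ⊆ [j]`, `|A| = |B| = r_w(i,j) + 1` for some `(i,j) ∈ [m] × [n]`. -/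
noncomputable def JwIdeal (K : Type*) [Field K] (m n : ℕ) (w : Equiv.Perm ℕ) :
    Ideal (MvPolynomial (Fin m × Fin n) K) :=
  Ideal.span {g : MvPolynomial (Fin m × Fin n) K |
    ∃ (i j : ℕ) (A : Finset (Fin m)) (B : Finset (Fin n)) (h : A.card = B.card),
      1 ≤ i ∧ i ≤ m ∧ 1 ≤ j ∧ j ≤ n ∧ (∀ a ∈ A, (a : ℕ) + 1 ≤ i) ∧
      (∀ b ∈ B, (b : ℕ) + 1 ≤ j) ∧ A.card = rnk w i j + 1 ∧ g = genMon K A B h}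

/-- The matrix Schubert variety
`X_w = {A ∈ Mat_{m×n} : rank A_{[i][j]} ≤ r_w(i,j) for all (i,j) ∈ [m] × [n]}`. -/
noncomputable def Xw (K : Type*) [Field K] (m n : ℕ) (w : Equiv.Perm ℕ) :
    Set (Matrix (Fin m) (Fin n) K) :=
  {A | ∀ (i j : ℕ) (hi : i ≤ m) (hj : j ≤ n), 1 ≤ i → 1 ≤ j →
    (A.submatrix (Fin.castLE hi) (Fin.castLE hj)).rank ≤ rnk w i j}

/-- `I(X_w)`: the ideal of polynomials vanishing on `X_w`. -/
noncomputable def IXw (K : Type*) [Field K] (m n : ℕ) (w : Equiv.Perm ℕ) :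
    Ideal (MvPolynomial (Fin m × Fin n) K) :=
  vanishingIdeal (Xw K m n w) fun A v => A v.1 v.2

/-- The variable `u_{pq}` (with `1 ≤ q < p ≤ n`) of `R_n`. -/
def ssvar {n : ℕ} (p q : ℕ) (hp : p ≤ n) (hq : 1 ≤ q) (hqp : q < p) : SSVar n :=
  ⟨(⟨p - 1, by omega⟩, ⟨q - 1, by omega⟩), Fin.mk_lt_mk.mpr (by omega)⟩

/-- Index set for the variables `u_{ij}`, `i > j ≥ 1`, over all positive integers. -/
abbrev PVar : Type := {p : ℕ × ℕ // 1 ≤ p.2 ∧ p.2 < p.1}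

/-- The generic skew-symmetric array `U^ss` over the positive integers:
`u_{xy}` if `x > y`, `-u_{yx}` if `x < y`, `0` if `x = y`. -/
noncomputable def UssP (K : Type*) [CommRing K] (x y : ℕ) : MvPolynomial PVar K :=
  if h : 1 ≤ y ∧ y < x then MvPolynomial.X ⟨(x, y), h⟩
  else if h' : 1 ≤ x ∧ x < y then -MvPolynomial.X ⟨(y, x), h'⟩
  else 0

/-- `pf(U^ss_{RR})` for a finite set `R` of positive integers. -/
noncomputable def pfUssP (K : Type*) [CommRing K] (R : Finset ℕ) : MvPolynomial PVar K :=
  Pfaffian (Matrix.of fun s t : Fin R.card =>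
    UssP K (R.orderEmbOfFin rfl s) (R.orderEmbOfFin rfl t))

/-- `g_{AB}`: the Pfaffian of the `(|B|+|A|) × (|B|+|A|)` skew-symmetric matrix whose
rows and columns are labeled by `B` (increasing) followed by `A` (increasing), with
entry `U^ss_{xy}` at a position labeled `(x, y)`, except that the entry is `0` when
both labels come from the `A`-block. -/
noncomputable def gAB (K : Type*) [CommRing K] (A B : Finset ℕ) : MvPolynomial PVar K :=
  Pfaffian ((Matrix.of fun p q : Fin B.card ⊕ Fin A.card =>
      match p, q with
      | Sum.inl s, Sum.inl t => UssP K (B.orderEmbOfFin rfl s) (B.orderEmbOfFin rfl t)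
      | Sum.inl s, Sum.inr t => UssP K (B.orderEmbOfFin rfl s) (A.orderEmbOfFin rfl t)
      | Sum.inr s, Sum.inl t => UssP K (A.orderEmbOfFin rfl s) (B.orderEmbOfFin rfl t)
      | Sum.inr _, Sum.inr _ => (0 : MvPolynomial PVar K)).submatrix
    finSumFinEquiv.symm finSumFinEquiv.symm)

/-- The exponent of the sign `⟨T, S⟩ = (-1)^{|S||T| + C(|S|,2) + ∑ of the (1-indexed)
positions in the increasing enumeration of `T` occupied by elements of `S`}`. -/
def setSgnExp (T S : Finset ℕ) : ℕ :=
  S.card * T.card + Nat.choose S.card 2 +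
    ∑ t : Fin T.card, if T.orderEmbOfFin rfl t ∈ S then (t : ℕ) + 1 else 0

/-!
All the ideals involved are generated by squarefree monomials, so both sides can be compared
monomial by monomial. Let `E` be the set of positions, on both sides of the diagonal, of the
variables dividing a monomial `m`. Since the sets `A ⊙ B` are exactly the antichains of the product
order, `m` lies in `J^ss_r` if and only if some corner `E ∩ ([i] × [j])` has width exceeding
`r i j`. As `E` is symmetric and avoids the diagonal, its corner widths satisfy the axioms of the
corner ranks of a skew-symmetric matrix (supermodularity comes from uncrossing antichains, evenness
on the diagonal from doubling the better half of an antichain), and hence agree on `[n] × [n]` with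
`r_z` for some `z ∈ FPF_n(I_n)`.

If `m ∉ J^ss_r`, then `r_z ≤ r`, so there is a Bruhat-minimal admissible `y ≤ z`. The Bruhat order
reverses rank tables, so `r_y ≥ r_z` bounds the corner widths of `E`, and `m ∉ J^ss_y`.
-/

section Width

open Finset

variable {α β : Type*}

theorem card_erase_add_card_insert [DecidableEq α] {P Q : Finset α} {x : α} (hxP : x ∈ P)
    (hxQ : x ∉ Q) : #(P.erase x) + #(insert x Q) = #P + #Q := by
  rw [card_insert_of_notMem hxQ, ← card_erase_add_one hxP]
  omega

section PartialOrder

variable [PartialOrder α]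

open Classical in
/-- The width of a finite subset of a poset: the largest cardinality of an antichain in it. -/
noncomputable def width (s : Finset α) : ℕ :=
  (s.powerset.filter fun t : Finset α => IsAntichain (· ≤ ·) (t : Set α)).sup card

theorem card_le_width {s t : Finset α} (hts : t ⊆ s) (ht : IsAntichain (· ≤ ·) (t : Set α)) :
    #t ≤ width s := by
  classical
  exact le_sup (f := card) (mem_filter.2 ⟨mem_powerset.2 hts, ht⟩)

theorem exists_isAntichain_card_eq_width (s : Finset α) :
    ∃ t ⊆ s, IsAntichain (· ≤ ·) (t : Set α) ∧ #t = width s := by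
  classical
  obtain ⟨t, ht, hcard⟩ := exists_mem_eq_sup
    (s.powerset.filter fun t : Finset α => IsAntichain (· ≤ ·) (t : Set α)) ⟨∅, by simp⟩ card
  rw [mem_filter, mem_powerset] at ht
  exact ⟨t, ht.1, ht.2, hcard.symm⟩

theorem width_mono {s t : Finset α} (hst : s ⊆ t) : width s ≤ width t := by
  obtain ⟨u, hus, hu, hcard⟩ := exists_isAntichain_card_eq_width s
  exact hcard ▸ card_le_width (hus.trans hst) hu

variable [DecidableEq α] {P Q : Finset α}

theorem minimal_and_maximal_of_mem_inter (hP : IsAntichain (· ≤ ·) (P : Set α))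
    (hQ : IsAntichain (· ≤ ·) (Q : Set α)) {x : α} (hx : x ∈ P ∩ Q) :
    Minimal (· ∈ P ∪ Q) x ∧ Maximal (· ∈ P ∪ Q) x := by
  obtain ⟨hxP, hxQ⟩ := mem_inter.1 hx
  refine ⟨⟨mem_union_left _ hxP, fun y hy hyx => ?_⟩, mem_union_left _ hxP, fun y hy hxy => ?_⟩ <;>
    rcases mem_union.1 hy with hy | hy
  · exact (hP.eq hy hxP hyx).ge
  · exact (hQ.eq hy hxQ hyx).ge
  · exact (hP.eq hxP hy hxy).ge
  · exact (hQ.eq hxQ hy hxy).ge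

theorem minimal_or_maximal_of_mem_left (hP : IsAntichain (· ≤ ·) (P : Set α))
    (hQ : IsAntichain (· ≤ ·) (Q : Set α)) {x : α} (hx : x ∈ P) :
    Minimal (· ∈ P ∪ Q) x ∨ Maximal (· ∈ P ∪ Q) x := by
  have hxPQ : x ∈ P ∪ Q := mem_union_left _ hx
  by_contra! hnot
  obtain ⟨y, hyx, hy⟩ := (not_minimal_iff_exists_lt hxPQ).1 hnot.1
  obtain ⟨z, hxz, hz⟩ := (not_maximal_iff_exists_gt hxPQ).1 hnot.2
  have hyQ : y ∈ Q := (mem_union.1 hy).resolve_left fun hyP => hP hyP hx hyx.ne hyx.le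
  have hzQ : z ∈ Q := (mem_union.1 hz).resolve_left fun hzP => hP hx hzP hxz.ne hxz.le
  exact hQ hyQ hzQ (hyx.trans hxz).ne (hyx.trans hxz).le

open Classical in
theorem card_add_card_le_card_minimal_add_card_maximal (hP : IsAntichain (· ≤ ·) (P : Set α))
    (hQ : IsAntichain (· ≤ ·) (Q : Set α)) :
    #P + #Q ≤ #{x ∈ P ∪ Q | Minimal (· ∈ P ∪ Q) x} + #{x ∈ P ∪ Q | Maximal (· ∈ P ∪ Q) x} := by
  rw [← card_union_add_card_inter P Q, ← card_union_add_card_inter (filter _ _) (filter _ _)]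
  refine add_le_add (card_le_card fun x hx => ?_) (card_le_card fun x hx => ?_)
  · rw [← filter_or]
    refine mem_filter.2 ⟨hx, ?_⟩
    rcases mem_union.1 hx with hxP | hxQ
    · exact minimal_or_maximal_of_mem_left hP hQ hxP
    · rw [union_comm]
      exact minimal_or_maximal_of_mem_left hQ hP hxQ
  · rw [← filter_and]
    exact mem_filter.2 ⟨mem_union_left _ (mem_inter.1 hx).1,
      minimal_and_maximal_of_mem_inter hP hQ hx⟩

theorem isAntichain_insert_of_minimal {x : α} (hQ : IsAntichain (· ≤ ·) (Q : Set α))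
    (hx : Minimal (· ∈ P ∪ Q) x) (hxQ : ∀ y ∈ Q, ¬ x ≤ y) :
    IsAntichain (· ≤ ·) ((insert x Q : Finset α) : Set α) := by
  rw [coe_insert]
  refine hQ.insert (fun y hy _ hyx => ?_) fun y hy _ => hxQ y hy
  exact hxQ y hy (hx.2 (mem_union_right _ hy) hyx)

end PartialOrder

section LinearOrder

variable [LinearOrder α] [LinearOrder β] {C : Set (α × β)} {p q : α × β}

theorem snd_lt_snd_of_fst_lt_fst (hC : IsAntichain (· ≤ ·) C) (hp : p ∈ C) (hq : q ∈ C)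
    (hpq : p.1 < q.1) : q.2 < p.2 := by
  by_contra! hle
  exact hC hp hq (fun heq => hpq.ne (congrArg Prod.fst heq)) ⟨hpq.le, hle⟩

theorem eq_of_fst_eq_fst (hC : IsAntichain (· ≤ ·) C) (hp : p ∈ C) (hq : q ∈ C)
    (hpq : p.1 = q.1) : p = q :=
  (le_total p.2 q.2).elim (fun hle => hC.eq hp hq ⟨hpq.le, hle⟩)
    fun hle => (hC.eq hq hp ⟨hpq.ge, hle⟩).symm

theorem eq_of_snd_eq_snd (hC : IsAntichain (· ≤ ·) C) (hp : p ∈ C) (hq : q ∈ C)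
    (hpq : p.2 = q.2) : p = q :=
  (le_total p.1 q.1).elim (fun hle => hC.eq hp hq ⟨hle, hpq.le⟩)
    fun hle => (hC.eq hq hp ⟨hle, hpq.ge⟩).symm

end LinearOrder

theorem isAntichain_map_prodComm [Preorder α] [Preorder β] {C : Finset (α × β)}
    (hC : IsAntichain (· ≤ ·) (C : Set (α × β))) :
    IsAntichain (· ≤ ·) ((C.map (Equiv.prodComm α β).toEmbedding : Finset (β × α)) :
      Set (β × α)) := by
  rw [coe_map]
  rintro _ ⟨p, hp, rfl⟩ _ ⟨q, hq, rfl⟩ hne hle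
  exact hC hp hq (fun heq => hne (heq ▸ rfl)) hle.symm

-- Below the diagonal, a relation between `p` and the transpose of `q` forces one between `p`
-- and `q`.
theorem isAntichain_union_map_prodComm [LinearOrder α] {V : Finset (α × α)}
    (hV : IsAntichain (· ≤ ·) (V : Set (α × α))) (hlower : ∀ p ∈ V, p.2 < p.1) :
    IsAntichain (· ≤ ·) ((V ∪ V.map (Equiv.prodComm α α).toEmbedding : Finset (α × α)) :
      Set (α × α)) := by
  rw [coe_union, isAntichain_union]
  refine ⟨hV, isAntichain_map_prodComm hV, ?_⟩
  intro p hp q' hq' _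
  obtain ⟨q, hq, rfl⟩ := mem_map.1 hq'
  have hp_lt := hlower p hp
  have hq_lt := hlower q hq
  constructor
  · rintro ⟨h₁, -⟩
    have h₁ : p.1 ≤ q.2 := h₁
    have hpq := hV.eq hp hq ⟨h₁.trans hq_lt.le, hp_lt.le.trans h₁⟩
    exact (h₁.trans_lt hq_lt).ne (congrArg Prod.fst hpq)
  · rintro ⟨-, h₂⟩
    have h₂ : q.1 ≤ p.2 := h₂
    have hqp := hV.eq hq hp ⟨h₂.trans hp_lt.le, hq_lt.le.trans h₂⟩
    exact (h₂.trans_lt hp_lt).ne (congrArg Prod.fst hqp)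

end Width

section CornerWidth

open Finset

variable {n : ℕ} {E : Finset (Fin n × Fin n)} {i j i' j' : ℕ} {p : Fin n × Fin n}

/-- The part of `E` in the north-west corner `[i] × [j]`; the element `k` of `Fin n` stands for
the row or column numbered `k + 1` in the 1-based convention. -/
def corner (E : Finset (Fin n × Fin n)) (i j : ℕ) : Finset (Fin n × Fin n) :=
  {p ∈ E | (p.1 : ℕ) < i ∧ (p.2 : ℕ) < j}

/-- The width of the part of `E` in the corner `[i] × [j]`, for the product order. -/
noncomputable def cornerWidth (E : Finset (Fin n × Fin n)) (i j : ℕ) : ℕ :=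
  width (corner E i j)

theorem mem_corner : p ∈ corner E i j ↔ p ∈ E ∧ (p.1 : ℕ) < i ∧ (p.2 : ℕ) < j :=
  mem_filter

theorem corner_subset (hi : i ≤ i') (hj : j ≤ j') : corner E i j ⊆ corner E i' j' := fun _ hp =>
  have ⟨hpE, hpi, hpj⟩ := mem_corner.1 hp
  mem_corner.2 ⟨hpE, hpi.trans_le hi, hpj.trans_le hj⟩

theorem cornerWidth_mono (hi : i ≤ i') (hj : j ≤ j') :
    cornerWidth E i j ≤ cornerWidth E i' j' :=
  width_mono (corner_subset hi hj)

theorem cornerWidth_zero_left : cornerWidth E 0 j = 0 := by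
  obtain ⟨C, hCE, -, hcard⟩ := exists_isAntichain_card_eq_width (corner E 0 j)
  have hC : C = ∅ := eq_empty_of_forall_notMem fun p hp => by
    simpa using (mem_corner.1 (hCE hp)).2.1
  rw [cornerWidth, ← hcard, hC, card_empty]

theorem cornerWidth_succ_left_le : cornerWidth E (i + 1) j ≤ cornerWidth E i j + 1 := by
  obtain ⟨C, hCE, hC, hcard⟩ := exists_isAntichain_card_eq_width (corner E (i + 1) j)
  have hupper : #{p ∈ C | (p.1 : ℕ) < i} ≤ cornerWidth E i j := by
    refine card_le_width (fun p hp => ?_) (hC.subset (coe_subset.2 (filter_subset _ _)))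
    have ⟨hpC, hpi⟩ := mem_filter.1 hp
    have ⟨hpE, _, hpj⟩ := mem_corner.1 (hCE hpC)
    exact mem_corner.2 ⟨hpE, hpi, hpj⟩
  have hlast : #{p ∈ C | ¬ (p.1 : ℕ) < i} ≤ 1 := by
    refine card_le_one.2 fun p hp q hq => ?_
    have ⟨hpC, hpi⟩ := mem_filter.1 hp
    have ⟨hqC, hqi⟩ := mem_filter.1 hq
    have hpi' := (mem_corner.1 (hCE hpC)).2.1
    have hqi' := (mem_corner.1 (hCE hqC)).2.1
    exact eq_of_fst_eq_fst hC hpC hqC (Fin.ext (by omega))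
  have hsplit := card_filter_add_card_filter_not (s := C) fun p => (p.1 : ℕ) < i
  rw [cornerWidth, ← hcard]
  omega

theorem erase_subset_corner_of_fst_eq {Q : Finset (Fin n × Fin n)}
    (hQE : Q ⊆ corner E (i + 1) j) (hQ : IsAntichain (· ≤ ·) (Q : Set (Fin n × Fin n)))
    {x : Fin n × Fin n} (hx : x ∈ Q) (hxi : (x.1 : ℕ) = i) : Q.erase x ⊆ corner E i j := by
  intro p hp
  have ⟨hpx, hpQ⟩ := mem_erase.1 hp
  have hpi : (p.1 : ℕ) ≠ i := fun h =>
    hpx (eq_of_fst_eq_fst hQ hpQ hx (Fin.ext (h.trans hxi.symm)))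
  have ⟨hpE, hpi', hpj⟩ := mem_corner.1 (hQE hpQ)
  exact mem_corner.2 ⟨hpE, by omega, hpj⟩

theorem erase_subset_corner_of_snd_eq {P : Finset (Fin n × Fin n)}
    (hPE : P ⊆ corner E i (j + 1)) (hP : IsAntichain (· ≤ ·) (P : Set (Fin n × Fin n)))
    {x : Fin n × Fin n} (hx : x ∈ P) (hxj : (x.2 : ℕ) = j) : P.erase x ⊆ corner E i j := by
  intro p hp
  have ⟨hpx, hpP⟩ := mem_erase.1 hp
  have hpj : (p.2 : ℕ) ≠ j := fun h =>
    hpx (eq_of_snd_eq_snd hP hpP hx (Fin.ext (h.trans hxj.symm)))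
  have ⟨hpE, hpi, hpj'⟩ := mem_corner.1 (hPE hpP)
  exact mem_corner.2 ⟨hpE, hpi, by omega⟩

-- The minimal and the maximal elements of `P ∪ Q` do the job, unless some minimal element lies
-- outside `[i] × [j]`; that element can then be moved from its own antichain to the other one.
theorem exists_antichains_uncrossing {P Q : Finset (Fin n × Fin n)}
    (hPE : P ⊆ corner E i (j + 1)) (hP : IsAntichain (· ≤ ·) (P : Set (Fin n × Fin n)))
    (hQE : Q ⊆ corner E (i + 1) j) (hQ : IsAntichain (· ≤ ·) (Q : Set (Fin n × Fin n))) :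
    ∃ L ⊆ corner E i j, ∃ U ⊆ corner E (i + 1) (j + 1),
      IsAntichain (· ≤ ·) (L : Set (Fin n × Fin n)) ∧
      IsAntichain (· ≤ ·) (U : Set (Fin n × Fin n)) ∧ #P + #Q ≤ #L + #U := by
  classical
  have hU : P ∪ Q ⊆ corner E (i + 1) (j + 1) :=
    union_subset (hPE.trans (corner_subset (by omega) le_rfl))
      (hQE.trans (corner_subset le_rfl (by omega)))
  by_cases hL : ∀ x, Minimal (· ∈ P ∪ Q) x → x ∈ corner E i j
  · refine ⟨{x ∈ P ∪ Q | Minimal (· ∈ P ∪ Q) x}, fun x hx => hL x (mem_filter.1 hx).2,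
      {x ∈ P ∪ Q | Maximal (· ∈ P ∪ Q) x}, (filter_subset _ _).trans hU, ?_, ?_,
      card_add_card_le_card_minimal_add_card_maximal hP hQ⟩
    · exact (setOfPred_minimal_antichain _).subset fun x hx => (mem_filter.1 hx).2
    · exact (setOfPred_maximal_antichain _).subset fun x hx => (mem_filter.1 hx).2
  push Not at hL
  obtain ⟨x, hx, hxL⟩ := hL
  have hxU := hU hx.1
  rw [mem_corner] at hxL hxU
  rcases mem_union.1 hx.1 with hxP | hxQ
  · have hxj : (x.2 : ℕ) = j := by have := mem_corner.1 (hPE hxP); grind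
    have hle : ∀ y ∈ Q, ¬ x ≤ y := fun y hy hxy =>
      (hxj ▸ (mem_corner.1 (hQE hy)).2.2).not_ge hxy.2
    exact ⟨P.erase x, erase_subset_corner_of_snd_eq hPE hP hxP hxj, insert x Q,
      insert_subset (hU hx.1) (subset_union_right.trans hU), hP.subset (erase_subset _ _),
      isAntichain_insert_of_minimal hQ hx hle,
      (card_erase_add_card_insert hxP fun hxQ => hle x hxQ le_rfl).ge⟩
  · have hxi : (x.1 : ℕ) = i := by have := mem_corner.1 (hQE hxQ); grind
    have hle : ∀ y ∈ P, ¬ x ≤ y := fun y hy hxy =>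
      (hxi ▸ (mem_corner.1 (hPE hy)).2.1).not_ge hxy.1
    exact ⟨Q.erase x, erase_subset_corner_of_fst_eq hQE hQ hxQ hxi, insert x P,
      insert_subset (hU hx.1) (subset_union_left.trans hU), hQ.subset (erase_subset _ _),
      isAntichain_insert_of_minimal hP (union_comm P Q ▸ hx) hle,
      (card_erase_add_card_insert hxQ fun hxP => hle x hxP le_rfl).ge.trans' (add_comm _ _).le⟩

theorem cornerWidth_add_cornerWidth_le :
    cornerWidth E i (j + 1) + cornerWidth E (i + 1) j ≤
      cornerWidth E i j + cornerWidth E (i + 1) (j + 1) := by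
  obtain ⟨P, hPE, hP, hPcard⟩ := exists_isAntichain_card_eq_width (corner E i (j + 1))
  obtain ⟨Q, hQE, hQ, hQcard⟩ := exists_isAntichain_card_eq_width (corner E (i + 1) j)
  obtain ⟨L, hLE, U, hUE, hL, hU, hcard⟩ := exists_antichains_uncrossing hPE hP hQE hQ
  calc
    cornerWidth E i (j + 1) + cornerWidth E (i + 1) j = #P + #Q := by
      rw [hPcard, hQcard, cornerWidth, cornerWidth]
    _ ≤ #L + #U := hcard
    _ ≤ _ := add_le_add (card_le_width hLE hL) (card_le_width hUE hU)

section Symmetric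

variable (hswap : ∀ p ∈ E, p.swap ∈ E)

include hswap

theorem map_prodComm_subset_corner {C : Finset (Fin n × Fin n)} (hC : C ⊆ corner E i j) :
    C.map (Equiv.prodComm (Fin n) (Fin n)).toEmbedding ⊆ corner E j i := by
  intro _ hp
  obtain ⟨q, hq, rfl⟩ := mem_map.1 hp
  have ⟨hqE, hqi, hqj⟩ := mem_corner.1 (hC hq)
  exact mem_corner.2 ⟨hswap q hqE, hqj, hqi⟩

theorem cornerWidth_comm (i j : ℕ) : cornerWidth E i j = cornerWidth E j i := by
  suffices hle : ∀ i j, cornerWidth E i j ≤ cornerWidth E j i from le_antisymm (hle i j) (hle j i)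
  intro i j
  obtain ⟨C, hCE, hC, hcard⟩ := exists_isAntichain_card_eq_width (corner E i j)
  rw [cornerWidth, ← hcard, ← card_map (Equiv.prodComm (Fin n) (Fin n)).toEmbedding]
  exact card_le_width (map_prodComm_subset_corner hswap hCE) (isAntichain_map_prodComm hC)

theorem two_mul_card_le_cornerWidth {V : Finset (Fin n × Fin n)} (hVE : V ⊆ corner E i i)
    (hV : IsAntichain (· ≤ ·) (V : Set (Fin n × Fin n))) (hlower : ∀ p ∈ V, p.2 < p.1) :
    2 * #V ≤ cornerWidth E i i := by
  have hdisj : Disjoint V (V.map (Equiv.prodComm (Fin n) (Fin n)).toEmbedding) := by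
    refine disjoint_left.2 fun p hp hp' => ?_
    obtain ⟨q, hq, rfl⟩ := mem_map.1 hp'
    exact (hlower q hq).not_gt (hlower _ hp)
  calc
    2 * #V = #(V ∪ V.map (Equiv.prodComm (Fin n) (Fin n)).toEmbedding) := by
      rw [card_union_of_disjoint hdisj, card_map, two_mul]
    _ ≤ cornerWidth E i i :=
      card_le_width (union_subset hVE (map_prodComm_subset_corner hswap hVE))
        (isAntichain_union_map_prodComm hV hlower)

-- In a maximum antichain, the part below the diagonal and the part above it each have at most
-- half of the elements, since together with its transpose each of them is an antichain.
theorem even_cornerWidth_self (hirrefl : ∀ p ∈ E, p.1 ≠ p.2) (i : ℕ) :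
    Even (cornerWidth E i i) := by
  obtain ⟨C, hCE, hC, hcard⟩ := exists_isAntichain_card_eq_width (corner E i i)
  have hlower := two_mul_card_le_cornerWidth hswap (V := {p ∈ C | p.2 < p.1})
    ((filter_subset _ _).trans hCE) (hC.subset (coe_subset.2 (filter_subset _ _)))
    fun p hp => (mem_filter.1 hp).2
  have hupper := two_mul_card_le_cornerWidth hswap
    (V := {p ∈ C | ¬ p.2 < p.1}.map (Equiv.prodComm (Fin n) (Fin n)).toEmbedding)
    (map_prodComm_subset_corner hswap ((filter_subset _ _).trans hCE))
    (isAntichain_map_prodComm (hC.subset (coe_subset.2 (filter_subset _ _))))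
    fun p hp => by
      obtain ⟨q, hq, rfl⟩ := mem_map.1 hp
      have ⟨hqC, hq'⟩ := mem_filter.1 hq
      exact lt_of_le_of_ne (not_lt.1 hq') (hirrefl q (mem_corner.1 (hCE hqC)).1)
  have hsplit := card_filter_add_card_filter_not (s := C) fun p => p.2 < p.1
  rw [card_map] at hupper
  rw [hcard, ← cornerWidth] at hsplit
  exact ⟨#{p ∈ C | p.2 < p.1}, by omega⟩

end Symmetric

end CornerWidth

section Involution

open Finset

variable {α : Type*}

theorem card_eq_card_fixed_add_two_mul_card [DecidableEq α] {s : Finset α} {f : α → α}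
    (hmaps : ∀ x ∈ s, f x ∈ s) (hinv : ∀ x ∈ s, f (f x) = x) {P : α → Prop} [DecidablePred P]
    (hP : ∀ x ∈ s, P x → f x ≠ x) (hP_swap : ∀ x ∈ s, f x ≠ x → (P (f x) ↔ ¬ P x)) :
    #s = #{x ∈ s | f x = x} + 2 * #{x ∈ s | P x} := by
  have himage : #{x ∈ s | f x ≠ x ∧ ¬ P x} = #{x ∈ s | P x} := by
    refine card_nbij' f f ?_ ?_ ?_ ?_ <;> grind [Set.MapsTo, Set.LeftInvOn]
  have hmoved := card_filter_add_card_filter_not (s := {x ∈ s | f x ≠ x}) P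
  have hfixed := card_filter_add_card_filter_not (s := s) fun x => f x = x
  have hPfilter : {x ∈ s | f x ≠ x ∧ P x} = {x ∈ s | P x} :=
    filter_congr fun x hx => ⟨And.right, fun h => ⟨hP x hx h, h⟩⟩
  rw [filter_filter, filter_filter, himage, hPfilter] at hmoved
  simp only [ne_eq] at hmoved
  omega

theorem exists_involution_of_symm_of_rightUnique {R : α → α → Prop}
    (hsymm : ∀ x y, R x y → R y x) (huniq : ∀ x y y', R x y → R x y' → y = y') :
    ∃ w : Equiv.Perm α, (∀ x, w (w x) = x) ∧ (∀ x y, R x y → w x = y) ∧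
      ∀ x, (∀ y, ¬ R x y) → w x = x := by
  classical
  let f : α → α := fun x => if h : ∃ y, R x y then h.choose else x
  have hf : ∀ x y, R x y → f x = y := fun x y hxy => by
    have hx : ∃ y, R x y := ⟨y, hxy⟩
    simp only [f, dif_pos hx]
    exact huniq x _ y hx.choose_spec hxy
  have hf_self : ∀ x, (∀ y, ¬ R x y) → f x = x := fun x hx => dif_neg (not_exists.2 hx)
  have hinv : Function.Involutive f := fun x => by
    by_cases hx : ∃ y, R x y
    · obtain ⟨y, hxy⟩ := hx
      rw [hf x y hxy, hf y x (hsymm x y hxy)]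
    · rw [hf_self x (not_exists.1 hx), hf_self x (not_exists.1 hx)]
  exact ⟨hinv.toPerm, hinv, hf, hf_self⟩

section SwapProduct

variable [DecidableEq α]

theorem prod_ofFn_swap_apply_of_ne {k : ℕ} {a b : Fin k → α} {x : α} (ha : ∀ t, x ≠ a t)
    (hb : ∀ t, x ≠ b t) : (List.ofFn fun t => Equiv.swap (a t) (b t)).prod x = x := by
  induction k with
  | zero => simp
  | succ k ih =>
    rw [List.ofFn_succ, List.prod_cons, Equiv.Perm.mul_apply,
      ih (fun t => ha t.succ) fun t => hb t.succ, Equiv.swap_apply_of_ne_of_ne (ha 0) (hb 0)]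

theorem prod_ofFn_swap_apply_left {k : ℕ} {a b : Fin k → α} (ha : Function.Injective a)
    (hb : Function.Injective b) (hab : ∀ s t, a s ≠ b t) (s : Fin k) :
    (List.ofFn fun t => Equiv.swap (a t) (b t)).prod (a s) = b s := by
  induction k with
  | zero => exact s.elim0
  | succ k ih =>
    rw [List.ofFn_succ, List.prod_cons, Equiv.Perm.mul_apply]
    cases s using Fin.cases with
    | zero =>
      rw [prod_ofFn_swap_apply_of_ne (fun t => ha.ne (Fin.succ_ne_zero t).symm) fun t => hab _ _,
        Equiv.swap_apply_left]
    | succ s =>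
      rw [ih (a := fun t => a t.succ) (b := fun t => b t.succ) (ha.comp (Fin.succ_injective k))
        (hb.comp (Fin.succ_injective k)) (fun s t => hab _ _) s,
        Equiv.swap_apply_of_ne_of_ne (hab _ _).symm (hb.ne (Fin.succ_ne_zero s))]

theorem prod_ofFn_swap_apply_right {k : ℕ} {a b : Fin k → α} (ha : Function.Injective a)
    (hb : Function.Injective b) (hab : ∀ s t, a s ≠ b t) (s : Fin k) :
    (List.ofFn fun t => Equiv.swap (a t) (b t)).prod (b s) = a s := by
  simp only [Equiv.swap_comm (a _)]
  exact prod_ofFn_swap_apply_left hb ha (fun s t => (hab t s).symm) s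

end SwapProduct

end Involution

section FpfStd

open Finset

variable {n : ℕ} {w : Equiv.Perm ℕ}

theorem mem_fixedPtsIn {x : ℕ} : x ∈ fixedPtsIn n w ↔ (1 ≤ x ∧ x ≤ n) ∧ w x = x := by
  simp [fixedPtsIn]

theorem le_of_orderEmbOfFin_fixedPtsIn (t : Fin #(fixedPtsIn n w)) :
    (fixedPtsIn n w).orderEmbOfFin rfl t ≤ n :=
  (mem_fixedPtsIn.1 (orderEmbOfFin_mem _ rfl t)).1.2

theorem exists_orderEmbOfFin_fixedPtsIn_eq {x : ℕ} (hx : 1 ≤ x) (hxn : x ≤ n) (hwx : w x = x) :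
    ∃ t, (fixedPtsIn n w).orderEmbOfFin rfl t = x := by
  have hmem : x ∈ Set.range ((fixedPtsIn n w).orderEmbOfFin rfl) := by
    rw [range_orderEmbOfFin]
    exact mem_fixedPtsIn.2 ⟨⟨hx, hxn⟩, hwx⟩
  exact hmem

theorem fpfStd_apply (x : ℕ) : fpfStd n w x =
    w ((List.ofFn fun t : Fin #(fixedPtsIn n w) =>
      Equiv.swap ((fixedPtsIn n w).orderEmbOfFin rfl t) (n + (t : ℕ) + 1)).prod
        (tailSwapFun (n + #(fixedPtsIn n w)) x)) :=
  rfl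

theorem tailSwapFun_of_le {m x : ℕ} (hx : x ≤ m) : tailSwapFun m x = x :=
  if_pos hx

theorem tailSwapFun_eq_oneFPF {m x : ℕ} (hm : Even m) (hx : m < x) :
    tailSwapFun m x = oneFPF x := by
  obtain ⟨k, rfl⟩ := hm
  unfold tailSwapFun oneFPF
  grind

theorem lt_tailSwapFun {m x : ℕ} (hx : m < x) : m < tailSwapFun m x := by
  unfold tailSwapFun
  grind

theorem fpfStd_orderEmbOfFin (hw : ∀ i, n < i → w i = i) (t : Fin #(fixedPtsIn n w)) :
    fpfStd n w ((fixedPtsIn n w).orderEmbOfFin rfl t) = n + t + 1 := by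
  have hle := le_of_orderEmbOfFin_fixedPtsIn t
  rw [fpfStd_apply, tailSwapFun_of_le (hle.trans (Nat.le_add_right _ _)),
    prod_ofFn_swap_apply_left (RelEmbedding.injective _) (fun s t h => Fin.ext (by omega))
      (fun s t => by have := le_of_orderEmbOfFin_fixedPtsIn s; omega),
    hw _ (by omega)]

theorem fpfStd_add_add_one (t : Fin #(fixedPtsIn n w)) :
    fpfStd n w (n + t + 1) = (fixedPtsIn n w).orderEmbOfFin rfl t := by
  rw [fpfStd_apply, tailSwapFun_of_le (by omega),
    prod_ofFn_swap_apply_right (RelEmbedding.injective _) (fun s t h => Fin.ext (by omega))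
      (fun s t => by have := le_of_orderEmbOfFin_fixedPtsIn s; omega)]
  exact (mem_fixedPtsIn.1 (orderEmbOfFin_mem _ rfl t)).2

theorem fpfStd_of_notMem_fixedPtsIn {x : ℕ} (hx : x ≤ n) (hwx : x ∉ fixedPtsIn n w) :
    fpfStd n w x = w x := by
  rw [fpfStd_apply, tailSwapFun_of_le (by omega), prod_ofFn_swap_apply_of_ne]
  · exact fun t h => hwx (h ▸ orderEmbOfFin_mem _ rfl t)
  · intro t
    omega

theorem fpfStd_of_lt (hw : ∀ i, n < i → w i = i) {x : ℕ} (hx : n + #(fixedPtsIn n w) < x) :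
    fpfStd n w x = tailSwapFun (n + #(fixedPtsIn n w)) x := by
  have hlt := lt_tailSwapFun hx
  rw [fpfStd_apply, prod_ofFn_swap_apply_of_ne, hw _ (by omega)]
  · intro t
    have := le_of_orderEmbOfFin_fixedPtsIn t
    omega
  · intro t
    omega

theorem fpfStd_cases (n : ℕ) (w : Equiv.Perm ℕ) {x : ℕ} (hx : 1 ≤ x) :
    (x ≤ n ∧ w x ≠ x) ∨ (∃ t, x = (fixedPtsIn n w).orderEmbOfFin rfl t) ∨
      (∃ t : Fin #(fixedPtsIn n w), x = n + t + 1) ∨ n + #(fixedPtsIn n w) < x := by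
  rcases le_or_gt x n with hxn | hxn
  · by_cases hwx : w x = x
    · obtain ⟨t, ht⟩ := exists_orderEmbOfFin_fixedPtsIn_eq hx hxn hwx
      exact .inr (.inl ⟨t, ht.symm⟩)
    · exact .inl ⟨hxn, hwx⟩
  · rcases le_or_gt x (n + #(fixedPtsIn n w)) with hxk | hxk
    · exact .inr (.inr (.inl ⟨⟨x - n - 1, by omega⟩, by simp only; omega⟩))
    · exact .inr (.inr (.inr hxk))

theorem fpfStd_of_apply_ne {x : ℕ} (hx : x ≤ n) (hwx : w x ≠ x) : fpfStd n w x = w x :=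
  fpfStd_of_notMem_fixedPtsIn hx fun hmem => hwx (mem_fixedPtsIn.1 hmem).2

section InvolIn

variable (hw : w ∈ InvolIn n)

include hw

theorem apply_apply_of_mem_InvolIn (x : ℕ) : w (w x) = x :=
  Equiv.Perm.congr_fun hw.2.1 x

theorem apply_mem_Icc_of_mem_InvolIn {x : ℕ} (hx : x ∈ Icc 1 n) : w x ∈ Icc 1 n := by
  have hww := apply_apply_of_mem_InvolIn hw x
  have h0 := hw.1
  rw [mem_Icc] at hx ⊢
  refine ⟨Nat.one_le_iff_ne_zero.2 fun h => ?_, not_lt.1 fun h => ?_⟩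
  · rw [h, h0] at hww
    omega
  · rw [hw.2.2 _ h] at hww
    omega

theorem even_add_card_fixedPtsIn : Even (n + #(fixedPtsIn n w)) := by
  have hcount := card_eq_card_fixed_add_two_mul_card (P := fun x => x < w x)
    (fun x => apply_mem_Icc_of_mem_InvolIn hw) (fun x _ => apply_apply_of_mem_InvolIn hw x)
    (fun x _ h => h.ne')
    (fun x _ h => by have := apply_apply_of_mem_InvolIn hw x; omega)
  rw [Nat.card_Icc, Nat.add_sub_cancel, ← fixedPtsIn] at hcount
  rw [Nat.even_iff]
  omega

theorem fpfStd_zero : fpfStd n w 0 = 0 :=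
  (fpfStd_of_notMem_fixedPtsIn n.zero_le (by simp [mem_fixedPtsIn])).trans hw.1

theorem fpfStd_fpfStd (x : ℕ) : fpfStd n w (fpfStd n w x) = x := by
  rcases Nat.eq_zero_or_pos x with rfl | hx
  · rw [fpfStd_zero hw, fpfStd_zero hw]
  rcases fpfStd_cases n w hx with ⟨hxn, hwx⟩ | ⟨t, rfl⟩ | ⟨t, rfl⟩ | htail
  · have hww := apply_apply_of_mem_InvolIn hw x
    have hwn := mem_Icc.1 (apply_mem_Icc_of_mem_InvolIn hw (mem_Icc.2 ⟨hx, hxn⟩))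
    rw [fpfStd_of_apply_ne hxn hwx, fpfStd_of_apply_ne hwn.2 (hww.symm ▸ hwx.symm), hww]
  · rw [fpfStd_orderEmbOfFin hw.2.2, fpfStd_add_add_one]
  · rw [fpfStd_add_add_one, fpfStd_orderEmbOfFin hw.2.2]
  · rw [fpfStd_of_lt hw.2.2 htail, fpfStd_of_lt hw.2.2 (lt_tailSwapFun htail),
      tailSwapFun_involutive]

theorem fpfStd_eq_oneFPF {x : ℕ} (hx : n + #(fixedPtsIn n w) < x) : fpfStd n w x = oneFPF x :=
  (fpfStd_of_lt hw.2.2 hx).trans (tailSwapFun_eq_oneFPF (even_add_card_fixedPtsIn hw) hx)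

theorem fpfStd_ne_self {x : ℕ} (hx : 1 ≤ x) : fpfStd n w x ≠ x := by
  rcases fpfStd_cases n w hx with ⟨hxn, hwx⟩ | ⟨t, rfl⟩ | ⟨t, rfl⟩ | htail
  · rwa [fpfStd_of_apply_ne hxn hwx]
  · have := le_of_orderEmbOfFin_fixedPtsIn t
    rw [fpfStd_orderEmbOfFin hw.2.2]
    omega
  · have := le_of_orderEmbOfFin_fixedPtsIn t
    rw [fpfStd_add_add_one]
    omega
  · rw [fpfStd_eq_oneFPF hw htail, oneFPF]
    grind

theorem fpfStd_mul_self : fpfStd n w * fpfStd n w = 1 := by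
  ext x
  rw [Equiv.Perm.mul_apply, fpfStd_fpfStd hw, Equiv.Perm.one_apply]

theorem fpfStd_mem_IFPFInfty : fpfStd n w ∈ IFPFInfty :=
  ⟨fpfStd_zero hw, fun _ => fpfStd_ne_self hw, fpfStd_mul_self hw,
    n + #(fixedPtsIn n w) + 1, fun _ => fpfStd_eq_oneFPF hw⟩

theorem Dss_fpfStd_subset : Dss (fpfStd n w) ⊆ Set.Icc 1 n ×ˢ Set.Icc 1 n := by
  rintro ⟨p, q⟩ ⟨hq, hqp, hlt, hpq⟩
  dsimp only at hq hqp hlt hpq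
  suffices hp : p ≤ n from ⟨⟨by omega, hp⟩, hq, by omega⟩
  by_contra! hp
  rcases fpfStd_cases n w hq with ⟨hqn, hwq⟩ | ⟨t, rfl⟩ | ⟨t, rfl⟩ | htail
  · have hwn := mem_Icc.1 (apply_mem_Icc_of_mem_InvolIn hw (mem_Icc.2 ⟨hq, hqn⟩))
    rw [fpfStd_of_apply_ne hqn hwq] at hpq
    omega
  · rw [fpfStd_orderEmbOfFin hw.2.2] at hpq
    obtain ⟨s, rfl⟩ : ∃ s : Fin #(fixedPtsIn n w), p = n + s + 1 :=
      ⟨⟨p - n - 1, by omega⟩, by simp only; omega⟩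
    rw [fpfStd_add_add_one, OrderEmbedding.lt_iff_lt, Fin.lt_def] at hqp
    omega
  · have := le_of_orderEmbOfFin_fixedPtsIn t
    rw [fpfStd_add_add_one] at hpq
    omega
  · rw [fpfStd_eq_oneFPF hw htail, oneFPF] at hpq
    grind

theorem fpfStd_mem_FPFIn : fpfStd n w ∈ FPFIn n :=
  ⟨fpfStd_mem_IFPFInfty hw, Dss_fpfStd_subset hw⟩

theorem rnk_fpfStd {i j : ℕ} (hi : i ≤ n) (hj : j ≤ n) :
    rnk (fpfStd n w) i j = #{x ∈ Icc 1 i | w x ≠ x ∧ w x ≤ j} := by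
  refine congrArg card (filter_congr fun x hx => ?_)
  obtain ⟨hx, hxi⟩ := mem_Icc.1 hx
  have hxn := hxi.trans hi
  by_cases hwx : w x = x
  · obtain ⟨t, rfl⟩ := exists_orderEmbOfFin_fixedPtsIn_eq hx hxn hwx
    rw [fpfStd_orderEmbOfFin hw.2.2, mem_Icc]
    simp only [hwx, ne_eq, not_true_eq_false, false_and, iff_false]
    omega
  · have hwn := mem_Icc.1 (apply_mem_Icc_of_mem_InvolIn hw (mem_Icc.2 ⟨hx, hxn⟩))
    rw [fpfStd_of_apply_ne hxn hwx, mem_Icc]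
    exact ⟨fun h => ⟨hwx, h.2⟩, fun h => ⟨hwn.1, h.2⟩⟩

end InvolIn

end FpfStd

section SkewRankFunction

open Finset

/-- The axioms of the table of ranks `ρ i j` of the corners `[i] × [j]` of a skew-symmetric matrix;
equivalently, of a symmetric partial permutation matrix with zero diagonal. -/
structure IsSkewRankFunction (ρ : ℕ → ℕ → ℕ) : Prop where
  zero_left : ∀ j, ρ 0 j = 0
  symm : ∀ i j, ρ i j = ρ j i
  le_succ : ∀ i j, ρ i j ≤ ρ (i + 1) j
  succ_le : ∀ i j, ρ (i + 1) j ≤ ρ i j + 1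
  supermodular : ∀ i j, ρ i (j + 1) + ρ (i + 1) j ≤ ρ i j + ρ (i + 1) (j + 1)
  even_diag : ∀ i, Even (ρ i i)

/-- Row `x` contributes to the corner ranks `ρ · j`. For `x = 0` this is false, since then
`x - 1 = x`. -/
def RowJump (ρ : ℕ → ℕ → ℕ) (x j : ℕ) : Prop :=
  ρ (x - 1) j < ρ x j

/-- The positions of the ones of the partial permutation matrix with corner ranks `ρ`: those where
the mixed second difference of `ρ` is positive. -/
def IsCell (ρ : ℕ → ℕ → ℕ) (x y : ℕ) : Prop :=
  ρ (x - 1) y + ρ x (y - 1) < ρ (x - 1) (y - 1) + ρ x y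

namespace IsSkewRankFunction

variable {ρ : ℕ → ℕ → ℕ} (hρ : IsSkewRankFunction ρ)

include hρ

theorem pred_le (x j : ℕ) : ρ (x - 1) j ≤ ρ x j := by
  cases x with
  | zero => exact le_rfl
  | succ x => exact hρ.le_succ x j

theorem le_pred_add_one (x j : ℕ) : ρ x j ≤ ρ (x - 1) j + 1 := by
  cases x with
  | zero => exact Nat.le_succ _
  | succ x => exact hρ.succ_le x j

theorem not_rowJump_zero (x : ℕ) : ¬ RowJump ρ x 0 := by
  rw [RowJump, hρ.symm x, hρ.zero_left]
  exact Nat.not_lt_zero _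

theorem rowJump_mono {x : ℕ} : Monotone (RowJump ρ x) := by
  refine monotone_nat_of_le_succ fun j hjump => ?_
  cases x with
  | zero => exact absurd hjump (lt_irrefl _)
  | succ x =>
    have := hρ.supermodular x j
    simp only [RowJump, Nat.add_sub_cancel] at hjump ⊢
    omega

theorem isCell_iff {x y : ℕ} : IsCell ρ x y ↔ RowJump ρ x y ∧ ¬ RowJump ρ x (y - 1) := by
  have := hρ.pred_le x y
  have := hρ.le_pred_add_one x y
  have := hρ.pred_le x (y - 1)
  simp only [IsCell, RowJump]
  omega

theorem isCell_symm {x y : ℕ} (hxy : IsCell ρ x y) : IsCell ρ y x := by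
  simp only [IsCell] at hxy ⊢
  rw [hρ.symm (y - 1) x, hρ.symm y (x - 1), hρ.symm (y - 1), hρ.symm y x]
  omega

theorem isCell_rightUnique {x y y' : ℕ} (hy : IsCell ρ x y) (hy' : IsCell ρ x y') : y = y' := by
  suffices hle : ∀ y y', IsCell ρ x y → IsCell ρ x y' → y ≤ y' from
    le_antisymm (hle y y' hy hy') (hle y' y hy' hy)
  intro y y' hy hy'
  by_contra! hlt
  exact (hρ.isCell_iff.1 hy).2
    (hρ.rowJump_mono (Nat.le_sub_one_of_lt hlt) (hρ.isCell_iff.1 hy').1)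

theorem not_isCell_self (x : ℕ) : ¬ IsCell ρ x x := by
  intro hx
  have hle := hρ.pred_le x (x - 1)
  have hle' := hρ.le_pred_add_one x x
  have hsymm := hρ.symm x (x - 1)
  obtain ⟨a, ha⟩ := hρ.even_diag x
  obtain ⟨b, hb⟩ := hρ.even_diag (x - 1)
  simp only [IsCell] at hx
  omega

theorem one_le_of_isCell {x y : ℕ} (hxy : IsCell ρ x y) : 1 ≤ x := by
  by_contra! hx
  obtain rfl : x = 0 := by omega
  exact lt_irrefl _ (hρ.isCell_iff.1 hxy).1

theorem rowJump_iff_exists_isCell {x j : ℕ} : RowJump ρ x j ↔ ∃ y ≤ j, IsCell ρ x y := by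
  refine ⟨fun hjump => ?_, fun ⟨y, hyj, hy⟩ => hρ.rowJump_mono hyj (hρ.isCell_iff.1 hy).1⟩
  induction j with
  | zero => exact absurd hjump (hρ.not_rowJump_zero x)
  | succ j ih =>
    by_cases hj : RowJump ρ x j
    · obtain ⟨y, hyj, hy⟩ := ih hj
      exact ⟨y, hyj.trans j.le_succ, hy⟩
    · exact ⟨j + 1, le_rfl, hρ.isCell_iff.2 ⟨hjump, hj⟩⟩

open Classical in
theorem card_rowJump (i j : ℕ) : #{x ∈ Icc 1 i | RowJump ρ x j} = ρ i j := by
  induction i with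
  | zero => simp [hρ.zero_left]
  | succ i ih =>
    have := hρ.le_succ i j
    have := hρ.succ_le i j
    rw [← insert_Icc_right_eq_Icc_add_one (by omega), filter_insert]
    split_ifs with hjump
    · rw [card_insert_of_notMem (by simp), ih]
      simp only [RowJump, Nat.add_sub_cancel] at hjump
      omega
    · rw [ih]
      simp only [RowJump, Nat.add_sub_cancel] at hjump
      omega

theorem exists_mem_InvolIn (n : ℕ) : ∃ w ∈ InvolIn n, ∀ x ∈ Icc 1 n, ∀ j ≤ n,
    (w x ≠ x ∧ w x ≤ j ↔ RowJump ρ x j) := by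
  obtain ⟨w, hww, hcell, hfix⟩ := exists_involution_of_symm_of_rightUnique
    (R := fun x y => x ≤ n ∧ y ≤ n ∧ IsCell ρ x y)
    (fun x y ⟨hx, hy, hxy⟩ => ⟨hy, hx, hρ.isCell_symm hxy⟩)
    (fun x y y' ⟨_, _, hy⟩ ⟨_, _, hy'⟩ => hρ.isCell_rightUnique hy hy')
  refine ⟨w, ⟨?_, Equiv.ext hww, fun i hi => ?_⟩, fun x hx j hj => ⟨fun ⟨hne, hle⟩ => ?_, ?_⟩⟩
  · exact hfix 0 fun y ⟨_, _, hy⟩ => absurd (hρ.one_le_of_isCell hy) (by simp)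
  · exact hfix i fun y ⟨hin, _⟩ => hi.not_ge hin
  · by_cases hy : ∃ y, x ≤ n ∧ y ≤ n ∧ IsCell ρ x y
    · obtain ⟨y, hy⟩ := hy
      rw [hcell x y hy] at hle
      exact hρ.rowJump_iff_exists_isCell.2 ⟨y, hle, hy.2.2⟩
    · exact absurd (hfix x (not_exists.1 hy)) hne
  · intro hjump
    obtain ⟨y, hyj, hxy⟩ := hρ.rowJump_iff_exists_isCell.1 hjump
    rw [hcell x y ⟨(mem_Icc.1 hx).2, hyj.trans hj, hxy⟩]
    exact ⟨fun h => hρ.not_isCell_self x (h ▸ hxy), hyj⟩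

theorem exists_mem_FPFIn_rnk_eq (n : ℕ) :
    ∃ z ∈ FPFIn n, ∀ i ≤ n, ∀ j ≤ n, rnk z i j = ρ i j := by
  classical
  obtain ⟨w, hw, hwρ⟩ := hρ.exists_mem_InvolIn n
  refine ⟨fpfStd n w, fpfStd_mem_FPFIn hw, fun i hi j hj => ?_⟩
  rw [rnk_fpfStd hw hi hj, ← hρ.card_rowJump i j]
  exact congrArg card (filter_congr fun x hx =>
    hwρ x (Icc_subset_Icc_right hi hx) j hj)

end IsSkewRankFunction

theorem isSkewRankFunction_cornerWidth {n : ℕ} {E : Finset (Fin n × Fin n)}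
    (hswap : ∀ p ∈ E, p.swap ∈ E) (hirrefl : ∀ p ∈ E, p.1 ≠ p.2) :
    IsSkewRankFunction (cornerWidth E) where
  zero_left _ := cornerWidth_zero_left
  symm := cornerWidth_comm hswap
  le_succ i _ := cornerWidth_mono i.le_succ le_rfl
  succ_le _ _ := cornerWidth_succ_left_le
  supermodular _ _ := cornerWidth_add_cornerWidth_le
  even_diag := even_cornerWidth_self hswap hirrefl

end SkewRankFunction

section Bruhat

open Finset

variable {z w : Equiv.Perm ℕ} {N i j : ℕ}

theorem card_le_card_of_mapsTo_sdiff {α : Type*} {s s' : Finset α}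
    (σ : Equiv.Perm α) (hσ : ∀ x ∈ s, x ∉ s' → σ x ∈ s' ∧ σ x ∉ s) : #s ≤ #s' := by
  classical
  refine card_sdiff_le_card_sdiff_iff.1 (card_le_card_of_injOn σ (fun x hx => ?_) σ.injective.injOn)
  have ⟨hxs, hxs'⟩ := mem_sdiff.1 hx
  exact mem_sdiff.2 (hσ x hxs hxs')

theorem rnk_mul_swap_le (hw : w 0 = 0) (hi : 1 ≤ i) (hij : i < j) (hlt : w i < w j) (p q : ℕ) :
    rnk (w * Equiv.swap i j) p q ≤ rnk w p q := by
  have hpos : 0 < w i := Nat.pos_of_ne_zero fun h => by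
    have := w.injective (h.trans hw.symm)
    omega
  refine card_le_card_of_mapsTo_sdiff (Equiv.swap i j) fun x hx hx' => ?_
  simp only [mem_filter, mem_Icc, Equiv.Perm.mul_apply, Equiv.swap_apply_self] at hx hx' ⊢
  rw [Equiv.swap_apply_def] at hx ⊢
  split_ifs at hx ⊢ <;> subst_vars <;> omega

theorem rnk_inv (w : Equiv.Perm ℕ) (p q : ℕ) : rnk w⁻¹ q p = rnk w p q := by
  refine (card_nbij' w w.symm (fun x hx => ?_) (fun x hx => ?_) (fun x _ => by simp)
    fun x _ => by simp).symm <;>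
  simp_all

/-- The inversions of `w` among the positions in `[N]`. -/
def inversions (N : ℕ) (w : Equiv.Perm ℕ) : Finset (ℕ × ℕ) :=
  {p ∈ Icc 1 N ×ˢ Icc 1 N | p.1 < p.2 ∧ w p.2 < w p.1}

theorem mem_inversions {p : ℕ × ℕ} : p ∈ inversions N w ↔
    (p.1 ∈ Icc 1 N ∧ p.2 ∈ Icc 1 N) ∧ p.1 < p.2 ∧ w p.2 < w p.1 := by
  rw [inversions, mem_filter, mem_product]

theorem card_inversions_le_mul_swap (hi : 1 ≤ i) (hij : i < j) (hj : j ≤ N) (hlt : w i < w j) :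
    #(inversions N w) ≤ #(inversions N (w * Equiv.swap i j)) := by
  refine card_le_card_of_mapsTo_sdiff ((Equiv.swap i j).prodCongr (Equiv.swap i j))
    fun ⟨a, b⟩ hab hab' => ?_
  simp only [mem_inversions, mem_Icc, Equiv.prodCongr_apply, Prod.map, Equiv.Perm.mul_apply,
    Equiv.swap_apply_self] at hab hab' ⊢
  rw [Equiv.swap_apply_def, Equiv.swap_apply_def] at hab' ⊢
  split_ifs at hab' ⊢ <;> subst_vars <;> omega

theorem card_inversions_inv (hw : ∀ x, w x ∈ Icc 1 N ↔ x ∈ Icc 1 N) :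
    #(inversions N w⁻¹) = #(inversions N w) := by
  refine (card_nbij' (fun p => (w p.2, w p.1)) (fun p => (w.symm p.2, w.symm p.1))
    (fun p hp => ?_) (fun p hp => ?_) (fun p _ => by simp) fun p _ => by simp).symm
  · have hp := mem_inversions.1 hp
    refine mem_inversions.2 ⟨⟨(hw _).2 hp.1.2, (hw _).2 hp.1.1⟩, hp.2.2, ?_⟩
    simpa using hp.2.1
  · have hp := mem_inversions.1 hp
    refine mem_inversions.2 ⟨⟨(hw _).1 ?_, (hw _).1 ?_⟩, hp.2.2, ?_⟩
    · simpa using hp.1.2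
    · simpa using hp.1.1
    · simpa using hp.2.1

theorem lt_oneFPF (hN : Even N) {x : ℕ} (hx : N < x) : N < oneFPF x := by
  obtain ⟨k, rfl⟩ := hN
  unfold oneFPF
  grind

theorem le_oneFPF_add_one (x : ℕ) : x ≤ oneFPF x + 1 := by
  unfold oneFPF
  split_ifs <;> omega

theorem oneFPF_le (x : ℕ) : oneFPF x ≤ x + 1 := by
  unfold oneFPF
  split_ifs <;> omega

theorem apply_apply_of_mem_IFPFInfty (hz : z ∈ IFPFInfty) (x : ℕ) : z (z x) = x :=
  Equiv.Perm.congr_fun hz.2.2.1 x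

theorem inv_eq_of_mem_IFPFInfty (hz : z ∈ IFPFInfty) : z⁻¹ = z :=
  inv_eq_of_mul_eq_one_left hz.2.2.1

theorem exists_even_ge_forall_eq_oneFPF (hz : z ∈ IFPFInfty) (m : ℕ) :
    ∃ N, Even N ∧ m ≤ N ∧ ∀ x, N < x → z x = oneFPF x := by
  obtain ⟨M, hM⟩ := hz.2.2.2
  exact ⟨2 * (M + m), even_two_mul _, by omega, fun x hx => hM x (by omega)⟩

/-- The part of the Rothe diagram `{(p, q) : q < z p, p < z⁻¹ q}` of an involution `z` that lies
in `[N] × [N]`. -/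
def rotheDiagram (N : ℕ) (z : Equiv.Perm ℕ) : Finset (ℕ × ℕ) :=
  {p ∈ Icc 1 N ×ˢ Icc 1 N | p.1 < z p.2 ∧ p.2 < z p.1}

theorem mem_rotheDiagram {p : ℕ × ℕ} : p ∈ rotheDiagram N z ↔
    (p.1 ∈ Icc 1 N ∧ p.2 ∈ Icc 1 N) ∧ p.1 < z p.2 ∧ p.2 < z p.1 := by
  rw [rotheDiagram, mem_filter, mem_product]

section Length

variable (hz : z ∈ IFPFInfty) (hN : Even N) (hzN : ∀ x, N < x → z x = oneFPF x)

include hz hN hzN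

theorem apply_mem_Icc_iff (x : ℕ) : z x ∈ Icc 1 N ↔ x ∈ Icc 1 N := by
  suffices hmaps : ∀ x, x ∈ Icc 1 N → z x ∈ Icc 1 N from
    ⟨fun hx => apply_apply_of_mem_IFPFInfty hz x ▸ hmaps _ hx, hmaps x⟩
  intro x hx
  have hzz := apply_apply_of_mem_IFPFInfty hz x
  have h0 := hz.1
  rw [mem_Icc] at hx ⊢
  refine ⟨Nat.one_le_iff_ne_zero.2 fun h => ?_, not_lt.1 fun h => ?_⟩
  · rw [h, h0] at hzz
    omega
  · have := lt_oneFPF hN h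
    rw [← hzN _ h, hzz] at this
    omega

theorem card_inversions_eq_card_rotheDiagram :
    #(inversions N z) = #(rotheDiagram N z) := by
  have hzz := apply_apply_of_mem_IFPFInfty hz
  have hmem := apply_mem_Icc_iff hz hN hzN
  refine card_nbij' (fun p => (p.1, z p.2)) (fun p => (p.1, z p.2)) (fun p hp => ?_)
    (fun p hp => ?_) (fun p _ => by simp [hzz]) fun p _ => by simp [hzz]
  · obtain ⟨⟨hp₁, hp₂⟩, hlt, hzlt⟩ := mem_inversions.1 hp
    exact mem_rotheDiagram.2 ⟨⟨hp₁, (hmem _).2 hp₂⟩, by rwa [hzz], hzlt⟩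
  · obtain ⟨⟨hp₁, hp₂⟩, hlt, hzlt⟩ := mem_rotheDiagram.1 hp
    exact mem_inversions.2 ⟨⟨hp₁, (hmem _).2 hp₂⟩, hlt, by rwa [hzz]⟩

theorem two_mul_card_lt_apply : 2 * #{x ∈ Icc 1 N | x < z x} = N := by
  have hzz := apply_apply_of_mem_IFPFInfty hz
  have hcount := card_eq_card_fixed_add_two_mul_card (P := fun x => x < z x)
    (fun x => (apply_mem_Icc_iff hz hN hzN x).2) (fun x _ => hzz x) (fun x _ h => h.ne')
    (fun x _ h => by have := hzz x; omega)
  have hfixed : {x ∈ Icc 1 N | z x = x} = ∅ :=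
    filter_eq_empty_iff.2 fun x hx => hz.2.1 x (mem_Icc.1 hx).1
  rw [Nat.card_Icc, hfixed, card_empty] at hcount
  omega

theorem card_filter_rotheDiagram_eq_ellFpf :
    #{p ∈ rotheDiagram N z | p.2 < p.1} = ellFpf z := by
  rw [ellFpf, ← Set.ncard_coe_finset]
  congr 1
  ext ⟨p, q⟩
  simp only [coe_filter, mem_rotheDiagram, mem_Icc, Dss, Set.mem_ofPred_eq]
  refine ⟨by omega, fun ⟨hq, _, _, _⟩ => ?_⟩
  suffices hp : p ≤ N by omega
  by_contra! hp
  rcases le_or_gt q N with hqN | hqN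
  · have := mem_Icc.1 ((apply_mem_Icc_iff hz hN hzN q).2 (mem_Icc.2 ⟨hq, hqN⟩))
    omega
  · have := oneFPF_le q
    rw [← hzN q hqN] at this
    omega

theorem card_rotheDiagram : #(rotheDiagram N z) = #{x ∈ Icc 1 N | x < z x} + 2 * ellFpf z := by
  rw [card_eq_card_fixed_add_two_mul_card (f := Prod.swap) (P := fun p => p.2 < p.1),
    card_filter_rotheDiagram_eq_ellFpf hz hN hzN]
  · congr 1
    refine card_nbij' Prod.fst (fun x => (x, x)) (fun p hp => ?_) (fun x hx => ?_)
      (fun p hp => ?_) fun _ _ => rfl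
    all_goals grind [mem_rotheDiagram]
  all_goals grind [mem_rotheDiagram]

theorem two_mul_card_inversions : 2 * #(inversions N z) = 4 * ellFpf z + N := by
  have hdiagram := card_rotheDiagram hz hN hzN
  have hdiag := two_mul_card_lt_apply hz hN hzN
  rw [card_inversions_eq_card_rotheDiagram hz hN hzN]
  omega

end Length

section Conjugation

variable (hz : z ∈ IFPFInfty) (hi : 1 ≤ i) (hij : i < j)

include hz hi hij

theorem conj_swap_mem_IFPFInfty : Equiv.swap i j * z * Equiv.swap i j ∈ IFPFInfty := by
  have hfix : ∀ x, j < x → Equiv.swap i j x = x := fun x hx =>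
    Equiv.swap_apply_of_ne_of_ne (by omega) (by omega)
  have hfix0 : Equiv.swap i j 0 = 0 := Equiv.swap_apply_of_ne_of_ne (by omega) (by omega)
  obtain ⟨h0, hne, hmul, M, hM⟩ := hz
  refine ⟨by simp [hfix0, h0], fun x hx hzx => ?_, ?_, M + j + 2, fun x hx => ?_⟩
  · refine hne (Equiv.swap i j x) ?_ ((Equiv.swap i j).injective (by simpa using hzx))
    exact Nat.one_le_iff_ne_zero.2 fun h =>
      absurd ((Equiv.swap i j).injective (h.trans hfix0.symm)) (by omega)
  · rw [mul_assoc, mul_assoc, mul_assoc, ← mul_assoc (Equiv.swap i j) (Equiv.swap i j),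
      Equiv.swap_mul_self, one_mul, ← mul_assoc z, hmul, one_mul, Equiv.swap_mul_self]
  · rw [Equiv.Perm.mul_apply, Equiv.Perm.mul_apply, hfix x (by omega), hM x (by omega), hfix]
    have := le_oneFPF_add_one x
    omega

theorem swap_apply_apply_eq (hlt : z i < z j) :
    Equiv.swap i j (z i) = z i ∧ Equiv.swap i j (z j) = z j := by
  have hzi := apply_apply_of_mem_IFPFInfty hz i
  have hzj := apply_apply_of_mem_IFPFInfty hz j
  have hnei := hz.2.1 i hi
  have hnej := hz.2.1 j (by omega)
  have hij' : z i ≠ j := fun h => by rw [h] at hzi; omega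
  have hji' : z j ≠ i := fun h => by rw [h] at hzj; omega
  exact ⟨Equiv.swap_apply_of_ne_of_ne hnei hij', Equiv.swap_apply_of_ne_of_ne hji' hnej⟩

theorem rnk_conj_swap_le (hlt : z i < z j) (p q : ℕ) :
    rnk (Equiv.swap i j * z * Equiv.swap i j) p q ≤ rnk z p q := by
  obtain ⟨hzi, hzj⟩ := swap_apply_apply_eq hz hi hij hlt
  have hzinv := inv_eq_of_mem_IFPFInfty hz
  have h0 : (Equiv.swap i j * z) 0 = 0 := by
    rw [Equiv.Perm.mul_apply, hz.1, Equiv.swap_apply_of_ne_of_ne (by omega) (by omega)]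
  calc
    rnk (Equiv.swap i j * z * Equiv.swap i j) p q ≤ rnk (Equiv.swap i j * z) p q :=
      rnk_mul_swap_le h0 hi hij (by simpa only [Equiv.Perm.mul_apply, hzi, hzj]) p q
    _ = rnk (z * Equiv.swap i j) q p := by
      rw [← rnk_inv, mul_inv_rev, hzinv, Equiv.swap_inv]
    _ ≤ rnk z q p := rnk_mul_swap_le hz.1 hi hij hlt q p
    _ = rnk z p q := by rw [← rnk_inv, hzinv]

theorem ellFpf_le_ellFpf_conj_swap (hlt : z i < z j) :
    ellFpf z ≤ ellFpf (Equiv.swap i j * z * Equiv.swap i j) := by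
  have hb := conj_swap_mem_IFPFInfty hz hi hij
  obtain ⟨hzi, hzj⟩ := swap_apply_apply_eq hz hi hij hlt
  obtain ⟨M, -, hjM, hzM⟩ := exists_even_ge_forall_eq_oneFPF hz j
  obtain ⟨N, hN, hMN, hbN⟩ := exists_even_ge_forall_eq_oneFPF hb M
  have hzN : ∀ x, N < x → z x = oneFPF x := fun x hx => hzM x (by omega)
  have hpres : ∀ x, (z * Equiv.swap i j) x ∈ Icc 1 N ↔ x ∈ Icc 1 N := fun x => by
    rw [Equiv.Perm.mul_apply, apply_mem_Icc_iff hz hN hzN, Equiv.swap_apply_def, mem_Icc, mem_Icc]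
    grind
  have hcard : #(inversions N z) ≤ #(inversions N (Equiv.swap i j * z * Equiv.swap i j)) :=
    calc
      #(inversions N z) ≤ #(inversions N (z * Equiv.swap i j)) :=
        card_inversions_le_mul_swap hi hij (by omega) hlt
      _ = #(inversions N (Equiv.swap i j * z)) := by
        rw [← card_inversions_inv hpres, mul_inv_rev, inv_eq_of_mem_IFPFInfty hz, Equiv.swap_inv]
      _ ≤ #(inversions N (Equiv.swap i j * z * Equiv.swap i j)) :=
        card_inversions_le_mul_swap hi hij (by omega)
          (by simpa only [Equiv.Perm.mul_apply, hzi, hzj])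
  have hlen := two_mul_card_inversions hz hN hzN
  have hlen' := two_mul_card_inversions hb hN hbN
  omega

-- If `z j < z i`, then conjugation by the same transposition leads from the conjugate back up to
-- `z`.
theorem apply_lt_apply_of_ellFpf_lt
    (hell : ellFpf z < ellFpf (Equiv.swap i j * z * Equiv.swap i j)) : z i < z j := by
  by_contra! hle
  have hlt : z j < z i := hle.lt_of_ne (z.injective.ne hij.ne')
  by_cases hzij : z i = j
  · have hzji : z j = i := by rw [← hzij, apply_apply_of_mem_IFPFInfty hz]
    rw [mul_assoc, Equiv.mul_swap_eq_swap_mul, hzij, hzji, Equiv.swap_comm j i,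
      Equiv.swap_mul_self_mul] at hell
    exact hell.false
  · have hzji : z j ≠ i := fun h => hzij (by rw [← h, apply_apply_of_mem_IFPFInfty hz])
    have hup := ellFpf_le_ellFpf_conj_swap (conj_swap_mem_IFPFInfty hz hi hij) hi hij (by
      simpa only [Equiv.Perm.mul_apply, Equiv.swap_apply_left, Equiv.swap_apply_right,
        Equiv.swap_apply_of_ne_of_ne hzji (hz.2.1 j (by omega)),
        Equiv.swap_apply_of_ne_of_ne (hz.2.1 i hi) hzij] using hlt)
    have hback : Equiv.swap i j * (Equiv.swap i j * z * Equiv.swap i j) * Equiv.swap i j = z := by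
      simp only [mul_assoc, Equiv.swap_mul_self, mul_one, Equiv.swap_mul_self_mul]
    rw [hback] at hup
    exact hup.not_gt hell

end Conjugation

section Order

variable {y : Equiv.Perm ℕ}

theorem rnk_le_rnk_of_fpfBruhatLe (hy : y ∈ IFPFInfty) (hyz : fpfBruhatLe y z) (p q : ℕ) :
    rnk z p q ≤ rnk y p q := by
  suffices h : z ∈ IFPFInfty ∧ rnk z p q ≤ rnk y p q from h.2
  induction hyz with
  | refl => exact ⟨hy, le_rfl⟩
  | tail _ hcover ih =>
    obtain ⟨i, j, hi, hij, rfl, hell⟩ := hcover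
    have hlt := apply_lt_apply_of_ellFpf_lt ih.1 hi hij (by omega)
    exact ⟨conj_swap_mem_IFPFInfty ih.1 hi hij, (rnk_conj_swap_le ih.1 hi hij hlt p q).trans ih.2⟩

theorem eq_or_ellFpf_lt_of_fpfBruhatLe (hyz : fpfBruhatLe y z) : y = z ∨ ellFpf y < ellFpf z := by
  induction hyz with
  | refl => exact .inl rfl
  | tail _ hcover ih =>
    obtain ⟨i, j, -, -, -, hell⟩ := hcover
    rcases ih with rfl | hlt
    · exact .inr (by omega)
    · exact .inr (by omega)

theorem exists_fpfBruhat_minimal_le {S : Set (Equiv.Perm ℕ)} (hz : z ∈ S) :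
    ∃ y ∈ S, fpfBruhatLe y z ∧ ∀ x ∈ S, fpfBruhatLe x y → x = y := by
  obtain ⟨y, ⟨hy, hyz⟩, hmin⟩ := exists_minimalFor_of_wellFoundedLT
    (fun y => y ∈ S ∧ fpfBruhatLe y z) ellFpf ⟨z, hz, .refl⟩
  refine ⟨y, hy, hyz, fun x hx hxy => (eq_or_ellFpf_lt_of_fpfBruhatLe hxy).resolve_right ?_⟩
  exact fun hlt => hlt.not_ge (hmin ⟨hx, hxy.trans hyz⟩ hlt.le)

end Order

end Bruhat

section Antidiagonal

open Finset

variable {α β : Type*} [LinearOrder α] [LinearOrder β]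

/-- The set `A ⊙ B`, pairing the elements of `A` in increasing order with those of `B` in
decreasing order. -/
def antidiagonalPairs (A : Finset α) (B : Finset β) (h : #A = #B) : Finset (α × β) :=
  univ.image fun t : Fin #A => (A.orderEmbOfFin rfl t, B.orderEmbOfFin h.symm t.rev)

variable {A : Finset α} {B : Finset β} {h : #A = #B} {p : α × β}

theorem mem_antidiagonalPairs : p ∈ antidiagonalPairs A B h ↔
    ∃ t, A.orderEmbOfFin rfl t = p.1 ∧ B.orderEmbOfFin h.symm t.rev = p.2 := by
  simp [antidiagonalPairs, Prod.ext_iff]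

theorem fst_mem_of_mem_antidiagonalPairs (hp : p ∈ antidiagonalPairs A B h) : p.1 ∈ A := by
  obtain ⟨t, ht, -⟩ := mem_antidiagonalPairs.1 hp
  exact ht ▸ orderEmbOfFin_mem A rfl t

theorem snd_mem_of_mem_antidiagonalPairs (hp : p ∈ antidiagonalPairs A B h) : p.2 ∈ B := by
  obtain ⟨t, -, ht⟩ := mem_antidiagonalPairs.1 hp
  exact ht ▸ orderEmbOfFin_mem B h.symm t.rev

theorem card_antidiagonalPairs : #(antidiagonalPairs A B h) = #A := by
  rw [antidiagonalPairs, card_image_of_injective, card_univ, Fintype.card_fin]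
  exact fun s t hst => (A.orderEmbOfFin rfl).injective (congrArg Prod.fst hst)

theorem isAntichain_antidiagonalPairs :
    IsAntichain (· ≤ ·) (antidiagonalPairs A B h : Set (α × β)) := by
  rintro ⟨_, _⟩ hp ⟨_, _⟩ hq hne ⟨hle₁, hle₂⟩
  obtain ⟨s, rfl, rfl⟩ := mem_antidiagonalPairs.1 hp
  obtain ⟨t, rfl, rfl⟩ := mem_antidiagonalPairs.1 hq
  have hst : s ≤ t := (A.orderEmbOfFin rfl).le_iff_le.1 hle₁
  have hts : t ≤ s := Fin.rev_le_rev.1 ((B.orderEmbOfFin h.symm).le_iff_le.1 hle₂)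
  exact hne (by rw [le_antisymm hst hts])

theorem card_image_fst_of_isAntichain {C : Finset (α × β)}
    (hC : IsAntichain (· ≤ ·) (C : Set (α × β))) : #(C.image Prod.fst) = #C :=
  card_image_of_injOn fun _ hp _ hq => eq_of_fst_eq_fst hC hp hq

theorem card_image_snd_of_isAntichain {C : Finset (α × β)}
    (hC : IsAntichain (· ≤ ·) (C : Set (α × β))) : #(C.image Prod.snd) = #C :=
  card_image_of_injOn fun _ hp _ hq => eq_of_snd_eq_snd hC hp hq

theorem antidiagonalPairs_image_subset {C : Finset (α × β)}
    (hC : IsAntichain (· ≤ ·) (C : Set (α × β))) :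
    antidiagonalPairs (C.image Prod.fst) (C.image Prod.snd)
      ((card_image_fst_of_isAntichain hC).trans (card_image_snd_of_isAntichain hC).symm) ⊆ C := by
  have hcard : #(C.image Prod.snd) = #(C.image Prod.fst) :=
    (card_image_snd_of_isAntichain hC).trans (card_image_fst_of_isAntichain hC).symm
  have hlift : ∀ t, ∃ c ∈ C, c.1 = (C.image Prod.fst).orderEmbOfFin rfl t := fun t =>
    mem_image.1 (orderEmbOfFin_mem _ rfl t)
  choose c hcC hc using hlift
  have hsnd : (fun t => (c t.rev).2) = (C.image Prod.snd).orderEmbOfFin hcard := by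
    refine orderEmbOfFin_unique hcard (fun t => mem_image_of_mem _ (hcC _)) fun s t hst => ?_
    refine snd_lt_snd_of_fst_lt_fst hC (hcC _) (hcC _) ?_
    rw [hc, hc]
    exact (OrderEmbedding.strictMono _) (Fin.rev_lt_rev.2 hst)
  intro p hp
  obtain ⟨t, ht₁, ht₂⟩ := mem_antidiagonalPairs.1 hp
  have hpc : p = c t := by
    refine Prod.ext (by rw [← ht₁, hc]) ?_
    rw [← ht₂, ← hsnd]
    simp only [Fin.rev_rev]
  exact hpc ▸ hcC t

theorem lt_cornerWidth_iff {n : ℕ} {E : Finset (Fin n × Fin n)} {i j k : ℕ} :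
    k < cornerWidth E i j ↔ ∃ (A B : Finset (Fin n)) (h : #A = #B), (∀ a ∈ A, (a : ℕ) + 1 ≤ i) ∧
      (∀ b ∈ B, (b : ℕ) + 1 ≤ j) ∧ #A = k + 1 ∧ antidiagonalPairs A B h ⊆ E := by
  constructor
  · intro hk
    obtain ⟨C₀, hC₀E, hC₀, hcard₀⟩ := exists_isAntichain_card_eq_width (corner E i j)
    obtain ⟨C, hCC₀, hcard⟩ := exists_subset_card_eq (hcard₀.symm ▸ hk : k + 1 ≤ #C₀)
    have hC : IsAntichain (· ≤ ·) (C : Set (Fin n × Fin n)) := hC₀.subset (coe_subset.2 hCC₀)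
    have hmem : ∀ p ∈ C, p ∈ E ∧ (p.1 : ℕ) < i ∧ (p.2 : ℕ) < j := fun p hp =>
      mem_corner.1 (hC₀E (hCC₀ hp))
    refine ⟨C.image Prod.fst, C.image Prod.snd, _, forall_mem_image.2 fun p hp => (hmem p hp).2.1,
      forall_mem_image.2 fun p hp => (hmem p hp).2.2,
      (card_image_fst_of_isAntichain hC).trans hcard,
      (antidiagonalPairs_image_subset hC).trans fun p hp => (hmem p hp).1⟩
  · rintro ⟨A, B, h, hA, hB, hcard, hE⟩
    rw [← Nat.succ_le_iff, Nat.succ_eq_add_one, ← hcard, ← card_antidiagonalPairs (h := h)]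
    refine card_le_width (fun p hp => mem_corner.2 ⟨hE hp, ?_, ?_⟩) isAntichain_antidiagonalPairs
    · exact hA _ (fst_mem_of_mem_antidiagonalPairs hp)
    · exact hB _ (snd_mem_of_mem_antidiagonalPairs hp)

end Antidiagonal

section MonomialIdeal

open Finset MvPolynomial

variable {n : ℕ}

/-- The set of positions of the skew-symmetric matrix of variables, on both sides of the diagonal,
whose variable divides the monomial with exponent vector `m`. -/
def symmSupport (m : SSVar n →₀ ℕ) : Finset (Fin n × Fin n) :=
  {p | ∃ v ∈ m.support, v.1 = p ∨ v.1 = p.swap}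

variable {m : SSVar n →₀ ℕ} {p : Fin n × Fin n}

theorem mem_symmSupport : p ∈ symmSupport m ↔ ∃ v ∈ m.support, v.1 = p ∨ v.1 = p.swap := by
  simp [symmSupport]

theorem swap_mem_symmSupport (hp : p ∈ symmSupport m) : p.swap ∈ symmSupport m := by
  rw [mem_symmSupport] at hp ⊢
  simpa only [Prod.swap_swap, or_comm] using hp

theorem fst_ne_snd_of_mem_symmSupport (hp : p ∈ symmSupport m) : p.1 ≠ p.2 := by
  obtain ⟨v, -, hv⟩ := mem_symmSupport.1 hp
  have hlt := v.2
  rcases hv with hv | hv <;> rw [hv] at hlt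
  · exact hlt.ne'
  · exact hlt.ne

theorem val_mem_symmSupport_iff {v : SSVar n} : v.1 ∈ symmSupport m ↔ v ∈ m.support := by
  refine ⟨fun hv => ?_, fun hv => mem_symmSupport.2 ⟨v, hv, .inl rfl⟩⟩
  obtain ⟨u, hu, huv | huv⟩ := mem_symmSupport.1 hv
  · exact Subtype.ext huv ▸ hu
  · have hlt := u.2
    rw [huv] at hlt
    exact absurd hlt v.2.not_gt

/-- The variables of the monomial `u^ss_{AB}`. -/
def ussVars (A B : Finset (Fin n)) (h : #A = #B) : Finset (SSVar n) :=
  {v | v.1 ∈ antidiagonalPairs A B h ∨ v.1.swap ∈ antidiagonalPairs A B h}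

variable {A B : Finset (Fin n)} {h : #A = #B}

theorem ussMon_eq_zero (K : Type*) [CommRing K]
    (hdiag : ∃ p ∈ antidiagonalPairs A B h, p.1 = p.2) : ussMon K A B = 0 := by
  obtain ⟨p, hp, hpp⟩ := hdiag
  obtain ⟨t, ht₁, ht₂⟩ := mem_antidiagonalPairs.1 hp
  rw [ussMon, dif_pos h, if_pos ⟨t, by rw [ht₁, ht₂, hpp]⟩]

theorem ussMon_eq_monomial (K : Type*) [CommRing K]
    (hdiag : ∀ p ∈ antidiagonalPairs A B h, p.1 ≠ p.2) :
    ussMon K A B = monomial (∑ v ∈ ussVars A B h, Finsupp.single v 1) (1 : K) := by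
  rw [ussMon, dif_pos h, if_neg, monomial_sum_one]
  · refine prod_congr (filter_congr fun v _ => ?_) fun _ _ => rfl
    rw [mem_antidiagonalPairs, mem_antidiagonalPairs, exists_or]
    rfl
  · rintro ⟨t, ht⟩
    exact hdiag (A.orderEmbOfFin rfl t, B.orderEmbOfFin h.symm t.rev)
      (mem_antidiagonalPairs.2 ⟨t, rfl, rfl⟩) ht

theorem sum_single_one_le_iff {σ : Type*} {s : Finset σ} {m : σ →₀ ℕ} :
    ∑ v ∈ s, Finsupp.single v 1 ≤ m ↔ s ⊆ m.support := by
  classical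
  simp only [Finsupp.le_def, Finsupp.finsetSum_apply, Finsupp.single_apply, sum_ite_eq',
    subset_iff, Finsupp.mem_support_iff]
  refine forall_congr' fun v => ?_
  split_ifs with hv <;> simp [hv, Nat.one_le_iff_ne_zero]

theorem antidiagonalPairs_subset_symmSupport_iff : antidiagonalPairs A B h ⊆ symmSupport m ↔
    (∀ p ∈ antidiagonalPairs A B h, p.1 ≠ p.2) ∧ ussVars A B h ⊆ m.support := by
  constructor
  · refine fun hsub => ⟨fun p hp => fst_ne_snd_of_mem_symmSupport (hsub hp), fun v hv => ?_⟩
    rw [← val_mem_symmSupport_iff]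
    rcases (mem_filter.1 hv).2 with hv | hv
    · exact hsub hv
    · exact swap_mem_symmSupport (hsub hv)
  · rintro ⟨hdiag, hvars⟩ p hp
    rcases lt_or_gt_of_ne (hdiag p hp) with hlt | hlt
    · exact mem_symmSupport.2 ⟨⟨p.swap, hlt⟩, hvars (mem_filter.2 ⟨mem_univ _, .inr hp⟩), .inr rfl⟩
    · exact mem_symmSupport.2 ⟨⟨p, hlt⟩, hvars (mem_filter.2 ⟨mem_univ _, .inl hp⟩), .inl rfl⟩

/-- The exponent vectors of the nonzero generators `u^ss_{AB}` of `J^ss_r`. -/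
def generatorExponents (n : ℕ) (r : ℕ → ℕ → ℕ) : Set (SSVar n →₀ ℕ) :=
  {e | ∃ (i j : ℕ) (A B : Finset (Fin n)) (h : #A = #B), 1 ≤ j ∧ j ≤ i ∧ i ≤ n ∧
    (∀ a ∈ A, (a : ℕ) + 1 ≤ i) ∧ (∀ b ∈ B, (b : ℕ) + 1 ≤ j) ∧ #A = r i j + 1 ∧
    (∀ p ∈ antidiagonalPairs A B h, p.1 ≠ p.2) ∧ e = ∑ v ∈ ussVars A B h, Finsupp.single v 1}

theorem JssIdealOfTable_eq_span_monomial (K : Type*) [CommRing K] (r : ℕ → ℕ → ℕ) :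
    JssIdealOfTable K n r =
      Ideal.span ((fun e => monomial e (1 : K)) '' generatorExponents n r) := by
  refine le_antisymm (Ideal.span_le.2 ?_) (Ideal.span_mono ?_)
  · rintro _ ⟨i, j, A, B, hj, hji, hin, hA, hB, hAcard, hBcard, rfl⟩
    have hcard : #A = #B := hAcard.trans hBcard.symm
    by_cases hdiag : ∃ p ∈ antidiagonalPairs A B hcard, p.1 = p.2
    · rw [ussMon_eq_zero K hdiag]
      exact zero_mem _
    · push Not at hdiag
      rw [ussMon_eq_monomial K hdiag]
      exact Ideal.subset_span
        ⟨_, ⟨i, j, A, B, hcard, hj, hji, hin, hA, hB, hAcard, hdiag, rfl⟩, rfl⟩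
  · rintro _ ⟨_, ⟨i, j, A, B, hcard, hj, hji, hin, hA, hB, hAcard, hdiag, rfl⟩, rfl⟩
    exact ⟨i, j, A, B, hj, hji, hin, hA, hB, hAcard, hcard ▸ hAcard,
      (ussMon_eq_monomial K hdiag).symm⟩

theorem exists_generatorExponents_le_iff {r : ℕ → ℕ → ℕ} :
    (∃ e ∈ generatorExponents n r, e ≤ m) ↔
      ∃ i j, 1 ≤ j ∧ j ≤ i ∧ i ≤ n ∧ r i j < cornerWidth (symmSupport m) i j := by
  simp only [lt_cornerWidth_iff, antidiagonalPairs_subset_symmSupport_iff]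
  constructor
  · rintro ⟨_, ⟨i, j, A, B, hcard, hj, hji, hin, hA, hB, hAcard, hdiag, rfl⟩, hle⟩
    exact ⟨i, j, hj, hji, hin, A, B, hcard, hA, hB, hAcard, hdiag, sum_single_one_le_iff.1 hle⟩
  · rintro ⟨i, j, hj, hji, hin, A, B, hcard, hA, hB, hAcard, hdiag, hsub⟩
    exact ⟨_, ⟨i, j, A, B, hcard, hj, hji, hin, hA, hB, hAcard, hdiag, rfl⟩,
      sum_single_one_le_iff.2 hsub⟩

theorem mem_JssIdealOfTable_iff {K : Type*} [CommRing K] {r : ℕ → ℕ → ℕ}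
    {f : MvPolynomial (SSVar n) K} :
    f ∈ JssIdealOfTable K n r ↔ ∀ m ∈ f.support,
      ∃ i j, 1 ≤ j ∧ j ≤ i ∧ i ≤ n ∧ r i j < cornerWidth (symmSupport m) i j := by
  simp only [JssIdealOfTable_eq_span_monomial, mem_ideal_span_monomial_image,
    exists_generatorExponents_le_iff]

theorem JssIdealOfTable_anti (K : Type*) [CommRing K] {r r' : ℕ → ℕ → ℕ}
    (hr : ∀ i j, 1 ≤ i → i ≤ n → 1 ≤ j → j ≤ n → r i j ≤ r' i j) :
    JssIdealOfTable K n r' ≤ JssIdealOfTable K n r := fun _ hf =>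
  mem_JssIdealOfTable_iff.2 fun m hm =>
    have ⟨i, j, hj, hji, hin, hlt⟩ := mem_JssIdealOfTable_iff.1 hf m hm
    ⟨i, j, hj, hji, hin, (hr i j (hj.trans hji) hin hj (hji.trans hin)).trans_lt hlt⟩

end MonomialIdeal

section MinimalFPFIn

variable {n : ℕ} {r : ℕ → ℕ → ℕ}

/-- The Bruhat-minimal elements among those `z ∈ FPF_n(I_n)` with `r_z ≤ r` on `[n] × [n]`. -/
def minimalFPFIn (n : ℕ) (r : ℕ → ℕ → ℕ) : Set (Equiv.Perm ℕ) :=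
  {z | z ∈ FPFIn n ∧ (∀ i j, 1 ≤ i → i ≤ n → 1 ≤ j → j ≤ n → rnk z i j ≤ r i j) ∧
    ∀ y ∈ FPFIn n, (∀ i j, 1 ≤ i → i ≤ n → 1 ≤ j → j ≤ n → rnk y i j ≤ r i j) →
      fpfBruhatLe y z → y = z}

theorem exists_mem_minimalFPFIn_le_rnk {ρ : ℕ → ℕ → ℕ} (hρ : IsSkewRankFunction ρ)
    (hle : ∀ i j, 1 ≤ i → i ≤ n → 1 ≤ j → j ≤ n → ρ i j ≤ r i j) :
    ∃ y ∈ minimalFPFIn n r, ∀ i ≤ n, ∀ j ≤ n, ρ i j ≤ rnk y i j := by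
  obtain ⟨z, hz, hzρ⟩ := hρ.exists_mem_FPFIn_rnk_eq n
  obtain ⟨y, ⟨hy, hyr⟩, hyz, hmin⟩ := exists_fpfBruhat_minimal_le
    (S := {z | z ∈ FPFIn n ∧ ∀ i j, 1 ≤ i → i ≤ n → 1 ≤ j → j ≤ n → rnk z i j ≤ r i j})
    ⟨hz, fun i j hi hin hj hjn => hzρ i hin j hjn ▸ hle i j hi hin hj hjn⟩
  refine ⟨y, ⟨hy, hyr, fun x hx hxr => hmin x ⟨hx, hxr⟩⟩, fun i hin j hjn => ?_⟩
  exact hzρ i hin j hjn ▸ rnk_le_rnk_of_fpfBruhatLe hy.1 hyz i j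

theorem cornerWidth_le_of_forall_le {E : Finset (Fin n × Fin n)} (hswap : ∀ p ∈ E, p.swap ∈ E)
    (hsym : ∀ i j, r i j = r j i)
    (hle : ∀ i j, 1 ≤ j → j ≤ i → i ≤ n → cornerWidth E i j ≤ r i j) (i j : ℕ) (hi : 1 ≤ i)
    (hin : i ≤ n) (hj : 1 ≤ j) (hjn : j ≤ n) : cornerWidth E i j ≤ r i j := by
  rcases le_total j i with hji | hij
  · exact hle i j hj hji hin
  · rw [cornerWidth_comm hswap, hsym]
    exact hle j i hi hij hjn

theorem statement8_general (K : Type*) [CommRing K] (n : ℕ) (r : ℕ → ℕ → ℕ)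
    (hsym : ∀ i j, r i j = r j i) :
    JssIdealOfTable K n r = ⨅ z ∈ minimalFPFIn n r, JssIdeal K n z := by
  refine le_antisymm (le_iInf₂ fun z hz => JssIdealOfTable_anti K hz.2.1) fun f hf => ?_
  refine mem_JssIdealOfTable_iff.2 fun m hm => ?_
  by_contra! hwidth
  have hswap : ∀ p ∈ symmSupport m, p.swap ∈ symmSupport m := fun _ => swap_mem_symmSupport
  obtain ⟨y, hy, hle⟩ := exists_mem_minimalFPFIn_le_rnk
    (isSkewRankFunction_cornerWidth hswap fun _ => fst_ne_snd_of_mem_symmSupport)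
    (cornerWidth_le_of_forall_le hswap hsym hwidth)
  have hfy : f ∈ JssIdeal K n y := by
    simp only [Submodule.mem_iInf] at hf
    exact hf y hy
  obtain ⟨i, j, -, hji, hin, hlt⟩ := mem_JssIdealOfTable_iff.1 hfy m hm
  exact hlt.not_ge (hle i hin j (hji.trans hin))

end MinimalFPFIn

/-- For a symmetric rank table `r`, the ideal `J^ss_r` is the
intersection of the ideals `J^ss_z` over all `z ∈ FPF_n(I_n)` that are Bruhat-minimal
among those with `r_z(i,j) ≤ r(i,j)` for all `i, j ∈ [n]`. -/
theorem statement8 (K : Type*) [Field K] [IsAlgClosed K] (n : ℕ) (hn : 1 ≤ n)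
    (r : ℕ → ℕ → ℕ) (hr0 : ∀ i, r i 0 = 0) (hr0' : ∀ j, r 0 j = 0)
    (hsym : ∀ i j, r i j = r j i) :
    JssIdealOfTable K n r =
      ⨅ z ∈ {z : Equiv.Perm ℕ | z ∈ FPFIn n ∧
          (∀ i j : ℕ, 1 ≤ i → i ≤ n → 1 ≤ j → j ≤ n → rnk z i j ≤ r i j) ∧
          ∀ y ∈ FPFIn n,
            (∀ i j : ℕ, 1 ≤ i → i ≤ n → 1 ≤ j → j ≤ n → rnk y i j ≤ r i j) →
            fpfBruhatLe y z → y = z},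
        JssIdeal K n z := by
  exact statement8_general K n r hsym

end Paper
end

section
/- Let K be an algebraically closed field and n >= 1. If r and s are symmetric rank tables and min(r,s) denotes the rank table with min(r,s)(i,j) := min(r(i,j), s(i,j)), then J^ss_{min(r,s)} = J^ss_r + J^ss_s as ideals of R_n. -/
namespace Paper

/-!
In the definition of `J^ss_r` the condition `|A| = |B| = r(i,j) + 1` may be relaxed to
`|A| = |B| > r(i,j)`: the first `k` pairs of the antidiagonal pairing `A ⊙ B` form `A' ⊙ B'`,
where `A'` consists of the `k` smallest elements of `A` and `B'` of the `k` largest elements of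
`B`, so `u^ss_{A'B'}` divides `u^ss_{AB}`. After this relaxation the generators for `min(r,s)` are
precisely those for `r` together with those for `s`, because `min(r,s)(i,j) < |A|` holds if and
only if `r(i,j) < |A|` or `s(i,j) < |A|`.
-/

section PairMonomial

open MvPolynomial Finset

variable (K : Type*) [CommRing K] {n : ℕ}

/-- The square-free monomial of a family of pairs `(f t, g t)`: the product of the variables
`u_{ij}`, `i > j`, such that `(i,j)` or `(j,i)` occurs in the family, or `0` if some pair is
diagonal. For an increasing enumeration `f` of `A` and a decreasing enumeration `g` of `B` it is
`u^ss_{AB}`, but it makes sense for, and restricts along, arbitrary families. -/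
noncomputable def pairMonomial {ι : Type*} [Fintype ι] (f g : ι → Fin n) :
    MvPolynomial (SSVar n) K :=
  if ∃ t, f t = g t then 0
  else ∏ v : SSVar n with ∃ t, (f t = v.1.1 ∧ g t = v.1.2) ∨ (f t = v.1.2 ∧ g t = v.1.1), X v

theorem pairMonomial_comp_dvd {ι κ : Type*} [Fintype ι] [Fintype κ] (f g : ι → Fin n)
    (φ : κ → ι) : pairMonomial K (f ∘ φ) (g ∘ φ) ∣ pairMonomial K f g := by
  by_cases hdiag : ∃ t, f t = g t
  · rw [pairMonomial, pairMonomial, if_pos hdiag]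
    exact dvd_zero _
  · have hdiag_comp : ¬∃ t, (f ∘ φ) t = (g ∘ φ) t := fun ⟨t, ht⟩ => hdiag ⟨φ t, ht⟩
    rw [pairMonomial, pairMonomial, if_neg hdiag, if_neg hdiag_comp]
    exact prod_dvd_prod_of_subset _ _ _ <|
      monotone_filter_right _ fun _ _ ⟨t, ht⟩ => ⟨φ t, ht⟩

theorem ussMon_eq_pairMonomial_orderEmbOfFin {k : ℕ} {A B : Finset (Fin n)}
    (hA : A.card = k) (hB : B.card = k) :
    ussMon K A B = pairMonomial K (A.orderEmbOfFin hA) (B.orderEmbOfFin hB ∘ Fin.rev) := by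
  subst hA
  simp only [ussMon, dif_pos hB.symm, pairMonomial, Function.comp_apply]

theorem ussMon_image_eq_pairMonomial {k : ℕ} {f g : Fin k → Fin n} (hf : StrictMono f)
    (hg : StrictAnti g) : ussMon K (univ.image f) (univ.image g) = pairMonomial K f g := by
  have hA : (univ.image f).card = k := by
    rw [card_image_of_injective _ hf.injective, card_fin]
  have hB : (univ.image g).card = k := by
    rw [card_image_of_injective _ hg.injective, card_fin]
  have hf_enum : f = (univ.image f).orderEmbOfFin hA :=
    orderEmbOfFin_unique hA (fun t => mem_image_of_mem f (mem_univ t)) hf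
  have hg_enum : g ∘ Fin.rev = (univ.image g).orderEmbOfFin hB :=
    orderEmbOfFin_unique hB (fun t => mem_image_of_mem g (mem_univ t.rev))
      (hg.comp Fin.rev_strictAnti)
  rw [ussMon_eq_pairMonomial_orderEmbOfFin K hA hB, ← hf_enum, ← hg_enum, Function.comp_assoc,
    Fin.rev_involutive.comp_self, Function.comp_id]

theorem exists_subset_card_eq_ussMon_dvd {k : ℕ} {A B : Finset (Fin n)}
    (hAB : A.card = B.card) (hk : k ≤ A.card) :
    ∃ A' ⊆ A, ∃ B' ⊆ B, A'.card = k ∧ B'.card = k ∧ ussMon K A' B' ∣ ussMon K A B := by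
  let f : Fin A.card → Fin n := A.orderEmbOfFin rfl
  let g : Fin A.card → Fin n := B.orderEmbOfFin hAB.symm ∘ Fin.rev
  have hf : StrictMono (f ∘ Fin.castLE hk) :=
    (A.orderEmbOfFin rfl).strictMono.comp (Fin.strictMono_castLE hk)
  have hg : StrictAnti (g ∘ Fin.castLE hk) :=
    ((B.orderEmbOfFin hAB.symm).strictMono.comp_strictAnti Fin.rev_strictAnti).comp_strictMono
      (Fin.strictMono_castLE hk)
  refine ⟨univ.image (f ∘ Fin.castLE hk), ?_, univ.image (g ∘ Fin.castLE hk), ?_, ?_, ?_, ?_⟩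
  · exact image_subset_iff.2 fun _ _ => orderEmbOfFin_mem _ _ _
  · exact image_subset_iff.2 fun _ _ => orderEmbOfFin_mem _ _ _
  · rw [card_image_of_injective _ hf.injective, card_fin]
  · rw [card_image_of_injective _ hg.injective, card_fin]
  · rw [ussMon_image_eq_pairMonomial K hf hg,
      ussMon_eq_pairMonomial_orderEmbOfFin K rfl hAB.symm]
    exact pairMonomial_comp_dvd K f g (Fin.castLE hk)

end PairMonomial

section RankTable

variable (K : Type*) [CommRing K] (n : ℕ)

/-- The relaxed generators of `J^ss_r`: the monomials `u^ss_{AB}` with `A ⊆ [i]`, `B ⊆ [j]` and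
`|A| = |B| > r(i,j)` for some `n ≥ i ≥ j ≥ 1`. As in `JssIdealOfTable`, the element `a : Fin n`
stands for `a + 1`. -/
def ussMonsAbove (r : ℕ → ℕ → ℕ) : Set (MvPolynomial (SSVar n) K) :=
  {g | ∃ (i j : ℕ) (A B : Finset (Fin n)), 1 ≤ j ∧ j ≤ i ∧ i ≤ n ∧
    (∀ a ∈ A, (a : ℕ) + 1 ≤ i) ∧ (∀ b ∈ B, (b : ℕ) + 1 ≤ j) ∧
    A.card = B.card ∧ r i j < A.card ∧ g = ussMon K A B}

theorem ussMonsAbove_min (r s : ℕ → ℕ → ℕ) :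
    ussMonsAbove K n (fun i j => min (r i j) (s i j)) =
      ussMonsAbove K n r ∪ ussMonsAbove K n s := by
  ext g
  simp only [ussMonsAbove, Set.mem_union, Set.mem_ofPred_eq, min_lt_iff, or_and_right,
    and_or_left, exists_or]

theorem JssIdealOfTable_eq_span_ussMonsAbove (r : ℕ → ℕ → ℕ) :
    JssIdealOfTable K n r = Ideal.span (ussMonsAbove K n r) := by
  refine le_antisymm (Ideal.span_mono ?_) (Ideal.span_le.2 ?_)
  · rintro g ⟨i, j, A, B, hj, hji, hi, hAi, hBj, hA, hB, rfl⟩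
    exact ⟨i, j, A, B, hj, hji, hi, hAi, hBj, hA.trans hB.symm, by lia, rfl⟩
  · rintro g ⟨i, j, A, B, hj, hji, hi, hAi, hBj, hAB, hr, rfl⟩
    obtain ⟨A', hA'A, B', hB'B, hA', hB', hdvd⟩ := exists_subset_card_eq_ussMon_dvd K hAB hr
    exact Ideal.mem_of_dvd _ hdvd <| Ideal.subset_span ⟨i, j, A', B', hj, hji, hi,
      fun a ha => hAi a (hA'A ha), fun b hb => hBj b (hB'B hb), hA', hB', rfl⟩

end RankTable

theorem statement9_general (K : Type*) [CommRing K] (n : ℕ) (r s : ℕ → ℕ → ℕ) :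
    JssIdealOfTable K n (fun i j => min (r i j) (s i j)) =
      JssIdealOfTable K n r + JssIdealOfTable K n s := by
  simp only [JssIdealOfTable_eq_span_ussMonsAbove, ussMonsAbove_min, Ideal.span_union,
    Submodule.add_eq_sup]

/-- For symmetric rank tables `r` and `s`,
`J^ss_{min(r,s)} = J^ss_r + J^ss_s` as ideals of `R_n`. -/
theorem statement9 (K : Type*) [Field K] [IsAlgClosed K] (n : ℕ) (hn : 1 ≤ n)
    (r s : ℕ → ℕ → ℕ) (hr0 : ∀ i, r i 0 = 0) (hr0' : ∀ j, r 0 j = 0)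
    (hrsym : ∀ i j, r i j = r j i)
    (hs0 : ∀ i, s i 0 = 0) (hs0' : ∀ j, s 0 j = 0) (hssym : ∀ i j, s i j = s j i) :
    JssIdealOfTable K n (fun i j => min (r i j) (s i j)) =
      JssIdealOfTable K n r + JssIdealOfTable K n s := by
  exact statement9_general K n r s

end Paper
end
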